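/- arXiv:2506.01030 — 2 statements merged into one kernel-verified Lean document; each statement's English description precedes it below -/
import Mathlib

section
/- Under Condition (★), the sum over ordered pairs (p, q) of prime elements with N(p)·N(q) ≤ x of 1/(N(p)·N(q)) equals (log log x)² + 2𝔄·log log x + 𝔄² + 𝔅 + O(log log x/log x) as x → ∞, where the implied constant depends only on the data P, N, κ, θ. -/
open Filter Topology Asymptotics
open scoped Classical

noncomputable section

/-- The norm on the free abelian monoid `P →₀ ℕ`, extended multiplicatively
from the norm `N` on the prime elements. -/
def Nm {P : Type*} (N : P → ℕ) (m : P →₀ ℕ) : ℕ :=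
  m.prod fun p k => N p ^ k

/-- The number of distinct prime elements generating `m`. -/
def omegaM {P : Type*} (m : P →₀ ℕ) : ℕ := m.support.card

/-- `m` is `h`-free: every multiplicity is at most `h - 1`. -/
def HFree {P : Type*} (h : ℕ) (m : P →₀ ℕ) : Prop := ∀ p, m p ≤ h - 1

/-- `m` is `h`-full: every nonzero multiplicity is at least `h`. -/
def HFull {P : Type*} (h : ℕ) (m : P →₀ ℕ) : Prop := ∀ p, m p = 0 ∨ h ≤ m p

/-- Condition (★): `#{m : N(m) ≤ x} = κ·x + O(x^θ)` with `κ > 0`, `0 ≤ θ < 1`. -/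
def StarCond {P : Type*} (N : P → ℕ) (κ θ : ℝ) : Prop :=
  0 < κ ∧ 0 ≤ θ ∧ θ < 1 ∧
    (fun x : ℝ => (({m : P →₀ ℕ | (Nm N m : ℝ) ≤ x}.ncard : ℝ) - κ * x))
      =O[atTop] fun x : ℝ => x ^ θ

/-- The generalized zeta function `ζ_M(s) = ∑_m N(m)^{-s}`. -/
def zetaM {P : Type*} (N : P → ℕ) (s : ℝ) : ℝ :=
  ∑' m : P →₀ ℕ, 1 / (Nm N m : ℝ) ^ s

/-- The constant `γ_h`. -/
def gammah {P : Type*} (N : P → ℕ) (h : ℕ) : ℝ :=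
  ∏' p : P, (1 + ((N p : ℝ) - (N p : ℝ) ^ (1 / (h : ℝ))) /
    ((N p : ℝ) ^ 2 * ((N p : ℝ) ^ (1 / (h : ℝ)) - 1)))

/-- `A` is the Mertens constant `𝔄` of the prime system:
`𝔄 = lim (∑_{N(p) ≤ x} 1/N(p) − log log x)`. -/
def IsMertens {P : Type*} (N : P → ℕ) (A : ℝ) : Prop :=
  Tendsto (fun x : ℝ =>
      (∑ᶠ p ∈ {p : P | (N p : ℝ) ≤ x}, 1 / (N p : ℝ)) - Real.log (Real.log x))
    atTop (𝓝 A)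

/-- The constant `𝔅 = -π²/6`. -/
def Bconst : ℝ := -(Real.pi ^ 2) / 6

/-- The constant `ℭ₁`, given the Mertens constant `A`. -/
def C1const {P : Type*} (N : P → ℕ) (h : ℕ) (A : ℝ) : ℝ :=
  A - ∑' p : P, ((N p : ℝ) - 1) / ((N p : ℝ) * ((N p : ℝ) ^ h - 1))

/-- The constant `ℭ₂`, given the Mertens constant `A`. -/
def C2const {P : Type*} (N : P → ℕ) (h : ℕ) (A : ℝ) : ℝ :=
  C1const N h A ^ 2 + C1const N h A + Bconst -
    ∑' p : P, (((N p : ℝ) ^ (h - 1) - 1) / ((N p : ℝ) ^ h - 1)) ^ 2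

/-- The convergent series `𝔏_h(r)`. -/
def LhSum {P : Type*} (N : P → ℕ) (h : ℕ) (r : ℝ) : ℝ :=
  ∑' p : P, 1 / ((N p : ℝ) ^ (r / (h : ℝ) - 1) *
    ((N p : ℝ) - (N p : ℝ) ^ (1 - 1 / (h : ℝ)) + 1))

/-- The constant `𝔇₁`, given the Mertens constant `A`. -/
def D1const {P : Type*} (N : P → ℕ) (h : ℕ) (A : ℝ) : ℝ :=
  A - Real.log (h : ℝ) + LhSum N h ((h : ℝ) + 1) - LhSum N h (2 * (h : ℝ))

/-- The constant `𝔇₂`, given the Mertens constant `A`. -/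
def D2const {P : Type*} (N : P → ℕ) (h : ℕ) (A : ℝ) : ℝ :=
  D1const N h A ^ 2 + D1const N h A + Bconst -
    ∑' p : P, (1 / ((N p : ℝ) - (N p : ℝ) ^ (1 - 1 / (h : ℝ)) + 1)) ^ 2

/-- The error term `R_{S_h}(x)` for `h`-free counts. -/
def RSfree (h : ℕ) (θ : ℝ) (x : ℝ) : ℝ :=
  if 1 / (h : ℝ) < θ then x ^ θ
  else if 1 / (h : ℝ) = θ then x ^ (1 / (h : ℝ)) * Real.log x
  else x ^ (1 / (h : ℝ))

/-- The error term `R_{N_h}(x)` for `h`-full counts. -/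
def RNfull (h : ℕ) (θ : ℝ) (x : ℝ) : ℝ :=
  if (h : ℝ) / ((h : ℝ) + 1) < θ then x ^ (θ / (h : ℝ))
  else if ∃ i : ℕ, 1 ≤ i ∧ i ≤ h - 1 ∧ θ = (h : ℝ) / ((h : ℝ) + (i : ℝ)) then
    x ^ (1 / ((h : ℝ) + 1)) * Real.log x
  else x ^ (1 / ((h : ℝ) + 1))

/-!
Let `μ` and `Λ` be the Möbius and von Mangoldt functions of the free monoid. Condition `(★)` yields
asymptotics with a power saving for `∑ 1 / N m`, `∑ log (N m) / N m` and `∑ 1` over `N m ≤ y`, and a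
combination of these sums has no main term. Convolving it with `μ` turns it into
`∑ Λ m / N m - log x - O(1)`, while the trivial bound `|μ| ≤ 1` already shows that it is `O(1)`; no
non-vanishing of a zeta function is needed. Prime powers contribute `O(1)`, and partial summation
gives `W u := ∑ 1 / N p = log u + 𝔄 + O(1 / u)` over the primes with `log (N p) ≤ u`.

With `V = log x` the sum over pairs is `∑ W (V - log (N p)) / N p`. Since
`log (V - t) = log V + log (1 - t / V)`, it equals
`(log V + 𝔄) * W V + ∑ log (1 - log (N p) / V) / N p + O(log V / V)`, and the density `dt / t` of
the primes on the logarithmic scale makes the last sum `∫ log (1 - t / V) dt / t`, which is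
`-Li₂(1) = -π² / 6` up to `O(log V / V)` by the reflection formula for the dilogarithm.
-/

section Summatory

open MeasureTheory

variable {ι : Type*} (h : ι → ℝ) [Northcott h]

/-- The finitely many indices of height at most `x`; summatory functions are sums over it. -/
def sublevel (x : ℝ) : Finset ι := (Northcott.finite_le (h := h) x).toFinset

variable {h}

@[simp]
theorem mem_sublevel {x : ℝ} {i : ι} : i ∈ sublevel h x ↔ h i ≤ x := by
  simp [sublevel]

theorem sublevel_mono {x y : ℝ} (hxy : x ≤ y) : sublevel h x ⊆ sublevel h y := fun _ hi ↦
  mem_sublevel.2 ((mem_sublevel.1 hi).trans hxy)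

theorem sum_sublevel_eq_sum_ite {w : ι → ℝ} {x y : ℝ} (hxy : x ≤ y) :
    ∑ i ∈ sublevel h x, w i = ∑ i ∈ sublevel h y, if h i ≤ x then w i else 0 := by
  rw [← Finset.sum_filter]
  refine Finset.sum_congr (Finset.ext fun i ↦ ?_) fun _ _ ↦ rfl
  simp only [mem_sublevel, Finset.mem_filter]
  exact ⟨fun hi ↦ ⟨hi.trans hxy, hi⟩, And.right⟩

theorem intervalIntegrable_ite_le {f : ℝ → ℝ} {a b : ℝ} (hf : IntervalIntegrable f volume a b)
    (c : ℝ) : IntervalIntegrable (fun t ↦ if c ≤ t then f t else 0) volume a b :=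
  have hIci : MeasurableSet (Set.Ici c) := measurableSet_Ici
  ⟨hf.1.indicator hIci, hf.2.indicator hIci⟩

theorem integral_ite_le {g g' : ℝ → ℝ} {a b c : ℝ} (hab : a ≤ b) (hcb : c ≤ b)
    (hg : ∀ t ∈ Set.Icc a b, HasDerivAt g (g' t) t) (hg' : ContinuousOn g' (Set.Icc a b)) :
    ∫ t in a..b, (if c ≤ t then g' t else 0) = g b - g (max a c) := by
  have hite : (fun t ↦ if c ≤ t then g' t else 0) = (Set.Ici c).indicator g' := by
    funext t
    simp only [Set.indicator, Set.mem_Ici]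
  have hsub : Set.uIcc (max a c) b ⊆ Set.Icc a b := by
    rw [Set.uIcc_of_le (max_le hab hcb)]
    exact Set.Icc_subset_Icc_left (le_max_left a c)
  rw [hite, intervalIntegral.integral_of_le hab, setIntegral_indicator measurableSet_Ici,
    setIntegral_congr_set (Filter.EventuallyEq.rfl.inter Ioi_ae_eq_Ici.symm),
    Set.Ioc_inter_Ioi, ← intervalIntegral.integral_of_le (max_le hab hcb)]
  exact intervalIntegral.integral_eq_sub_of_hasDerivAt (fun t ht ↦ hg t (hsub ht))
    (hg'.mono hsub).intervalIntegrable

theorem sum_sublevel_mul_max {w : ι → ℝ} {g : ℝ → ℝ} {a b : ℝ} (hab : a ≤ b) :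
    ∑ i ∈ sublevel h b, w i * g (max a (h i)) =
      ∑ i ∈ sublevel h b, w i * g (h i) - ∑ i ∈ sublevel h a, w i * g (h i)
        + g a * ∑ i ∈ sublevel h a, w i := by
  rw [sum_sublevel_eq_sum_ite hab, sum_sublevel_eq_sum_ite hab, Finset.mul_sum,
    ← Finset.sum_sub_distrib, ← Finset.sum_add_distrib]
  refine Finset.sum_congr rfl fun i _ ↦ ?_
  split_ifs with hi
  · rw [max_eq_left hi]
    ring
  · rw [max_eq_right (not_le.1 hi).le]
    ring

theorem mul_sum_sublevel_eqOn {w : ι → ℝ} {f : ℝ → ℝ} {a b : ℝ} (hab : a ≤ b) :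
    Set.EqOn (fun t ↦ ∑ i ∈ sublevel h b, w i * if h i ≤ t then f t else 0)
      (fun t ↦ f t * ∑ i ∈ sublevel h t, w i) (Set.uIcc a b) := by
  intro t ht
  rw [Set.uIcc_of_le hab] at ht
  simp only [sum_sublevel_eq_sum_ite ht.2, Finset.mul_sum, mul_ite, mul_zero, mul_comm]

theorem intervalIntegrable_mul_sum_sublevel {w : ι → ℝ} {f : ℝ → ℝ} {a b : ℝ} (hab : a ≤ b)
    (hf : IntervalIntegrable f volume a b) :
    IntervalIntegrable (fun t ↦ f t * ∑ i ∈ sublevel h t, w i) volume a b := by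
  refine (intervalIntegrable_congr
    ((mul_sum_sublevel_eqOn hab).mono Set.uIoc_subset_uIcc)).1 ?_
  simpa only [Finset.sum_fn] using IntervalIntegrable.sum _ fun i _ ↦
    (intervalIntegrable_ite_le hf (h i)).const_mul (w i)

theorem sum_sublevel_mul_eq_sub_integral {w : ι → ℝ} {g g' : ℝ → ℝ} {a b : ℝ} (hab : a ≤ b)
    (hg : ∀ t ∈ Set.Icc a b, HasDerivAt g (g' t) t) (hg' : ContinuousOn g' (Set.Icc a b)) :
    ∑ i ∈ sublevel h b, w i * g (h i) - ∑ i ∈ sublevel h a, w i * g (h i) =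
      g b * ∑ i ∈ sublevel h b, w i - g a * ∑ i ∈ sublevel h a, w i
        - ∫ t in a..b, g' t * ∑ i ∈ sublevel h t, w i := by
  have hint (i) (_ : i ∈ sublevel h b) :=
    (intervalIntegrable_ite_le (hg'.intervalIntegrable_of_Icc hab) (h i)).const_mul (w i)
  have hite (i) (hi : i ∈ sublevel h b) := integral_ite_le hab (mem_sublevel.1 hi) hg hg'
  rw [← intervalIntegral.integral_congr (mul_sum_sublevel_eqOn hab),
    intervalIntegral.integral_finsetSum hint]
  simp only [intervalIntegral.integral_const_mul]
  rw [Finset.sum_congr rfl fun i hi ↦ congrArg (w i * ·) (hite i hi)]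
  simp only [mul_sub, Finset.sum_sub_distrib, ← Finset.sum_mul, sum_sublevel_mul_max hab]
  ring

theorem abs_sum_sublevel_mul_sub_integral_le {w : ι → ℝ} {g g' V V' e : ℝ → ℝ} {a b : ℝ}
    (hab : a ≤ b) (hg : ∀ t ∈ Set.Icc a b, HasDerivAt g (g' t) t)
    (hg' : ContinuousOn g' (Set.Icc a b)) (hV : ∀ t ∈ Set.Icc a b, HasDerivAt V (V' t) t)
    (hV' : ContinuousOn V' (Set.Icc a b)) (he : ContinuousOn e (Set.Icc a b))
    (hW : ∀ t ∈ Set.Icc a b, |∑ i ∈ sublevel h t, w i - V t| ≤ e t) :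
    |∑ i ∈ sublevel h b, w i * g (h i) - ∑ i ∈ sublevel h a, w i * g (h i)
        - ∫ t in a..b, g t * V' t| ≤ |g b| * e b + |g a| * e a + ∫ t in a..b, |g' t| * e t := by
  have hVc : ContinuousOn V (Set.Icc a b) := fun t ht ↦
    (hV t ht).continuousAt.continuousWithinAt
  have hu : Set.uIcc a b = Set.Icc a b := Set.uIcc_of_le hab
  have hparts : ∫ t in a..b, g t * V' t = g b * V b - g a * V a - ∫ t in a..b, g' t * V t :=
    intervalIntegral.integral_mul_deriv_eq_deriv_mul (fun t ht ↦ hg t (hu ▸ ht))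
      (fun t ht ↦ hV t (hu ▸ ht)) (hg'.intervalIntegrable_of_Icc hab)
      (hV'.intervalIntegrable_of_Icc hab)
  have hterm (t) (ht : t ∈ Set.Icc a b) (c : ℝ) :
      |c * (∑ i ∈ sublevel h t, w i - V t)| ≤ |c| * e t := by
    rw [abs_mul]
    exact mul_le_mul_of_nonneg_left (hW t ht) (abs_nonneg c)
  have hdom : IntervalIntegrable (fun t ↦ |g' t| * e t) volume a b :=
    (hg'.abs.mul he).intervalIntegrable_of_Icc hab
  have hint_le : |(∫ t in a..b, g' t * ∑ i ∈ sublevel h t, w i) - ∫ t in a..b, g' t * V t|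
      ≤ ∫ t in a..b, |g' t| * e t := by
    rw [← intervalIntegral.integral_sub
      (intervalIntegrable_mul_sum_sublevel hab (hg'.intervalIntegrable_of_Icc hab))
      ((hg'.fun_mul hVc).intervalIntegrable_of_Icc hab), ← Real.norm_eq_abs]
    refine intervalIntegral.norm_integral_le_of_norm_le hab (.of_forall fun t ht ↦ ?_) hdom
    rw [← mul_sub, Real.norm_eq_abs]
    exact hterm t (Set.Ioc_subset_Icc_self ht) _
  have hb := hterm b (Set.right_mem_Icc.2 hab) (g b)
  have ha := hterm a (Set.left_mem_Icc.2 hab) (g a)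
  rw [sum_sublevel_mul_eq_sub_integral hab hg hg', hparts]
  rw [abs_le] at *
  constructor <;> linarith

/-- The number of indices of height at most `t` is `κ * t + O(t ^ (1 - 2 * η))`, uniformly in
`t ≥ 1`. The exponent is parametrised so that `η` is half of the power saving: one `η` pays for
logarithms, the other one is the saving that remains. -/
def HasLinearCount (h : ι → ℝ) [Northcott h] (κ η : ℝ) : Prop :=
  ∃ C, ∀ t ≥ 1, |((sublevel h t).card : ℝ) - κ * t| ≤ C * t ^ (1 - 2 * η)

theorem exists_dist_le_of_tendsto_zero {α β : Type*} [PseudoMetricSpace α] [CompleteSpace α]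
    [SemilatticeSup β] [Nonempty β] {Φ : β → α} {ε : β → ℝ} {b₀ : β}
    (hε : Tendsto ε atTop (𝓝 0)) (hΦ : ∀ a b, b₀ ≤ a → a ≤ b → dist (Φ b) (Φ a) ≤ ε a) :
    ∃ c, ∀ a, b₀ ≤ a → dist (Φ a) c ≤ ε a := by
  have hcauchy : CauchySeq Φ := by
    rw [Metric.cauchySeq_iff']
    intro δ hδ
    obtain ⟨a, haδ, ha⟩ := ((hε.eventually_lt_const hδ).and (eventually_ge_atTop b₀)).exists
    exact ⟨a, fun b hb ↦ (hΦ a b ha hb).trans_lt haδ⟩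
  obtain ⟨c, hc⟩ := cauchySeq_tendsto_of_complete hcauchy
  refine ⟨c, fun a ha ↦ ?_⟩
  rw [dist_comm]
  exact le_of_tendsto (hc.dist tendsto_const_nhds)
    ((eventually_ge_atTop a).mono fun b hb ↦ hΦ a b ha hb)

theorem integral_rpow_neg_sub_one_le {η a b : ℝ} (hη : 0 < η) (ha : 0 < a) (hab : a ≤ b) :
    ∫ t in a..b, t ^ (-η - 1) ≤ a ^ (-η) / η := by
  have hb : 0 < b := ha.trans_le hab
  rw [integral_rpow (.inr ⟨by linarith, Set.notMem_uIcc_of_lt ha hb⟩)]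
  have hbη : 0 ≤ b ^ (-η) := Real.rpow_nonneg hb.le _
  rw [show (b ^ (-η - 1 + 1) - a ^ (-η - 1 + 1)) / (-η - 1 + 1) = (a ^ (-η) - b ^ (-η)) / η by
    rw [sub_add_cancel, div_neg, ← neg_div, neg_sub]]
  gcongr
  linarith

theorem abs_sum_sublevel_sub_mul_sub_le {κ η K a b : ℝ} {e f f' F : ℝ → ℝ} (hη : 0 < η)
    (hcount : ∀ t ≥ 1, |((sublevel h t).card : ℝ) - κ * t| ≤ e t)
    (he : ContinuousOn e (Set.Ici 1)) (hF : ∀ t ≥ 1, HasDerivAt F (f t) t)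
    (hf : ∀ t ≥ 1, HasDerivAt f (f' t) t) (hf' : ContinuousOn f' (Set.Ici 1))
    (hfe : ∀ t ≥ 1, |f t| * e t ≤ K * t ^ (-η))
    (hf'e : ∀ t ≥ 1, |f' t| * e t ≤ K * t ^ (-η - 1)) (ha : 1 ≤ a) (hab : a ≤ b) :
    |∑ i ∈ sublevel h b, f (h i) - ∑ i ∈ sublevel h a, f (h i) - κ * (F b - F a)| ≤
      K * (2 + 1 / η) * a ^ (-η) := by
  have ha0 : 0 < a := by linarith
  have hb : 1 ≤ b := ha.trans hab
  have hK : 0 ≤ K := by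
    have he1 : 0 ≤ e 1 := (abs_nonneg _).trans (hcount 1 le_rfl)
    simpa using (mul_nonneg (abs_nonneg (f 1)) he1).trans (hfe 1 le_rfl)
  have hsub : Set.Icc a b ⊆ Set.Ici 1 := fun t ht ↦ ha.trans ht.1
  have hu : Set.uIcc a b = Set.Icc a b := Set.uIcc_of_le hab
  have hfc : ContinuousOn f (Set.Icc a b) := fun t ht ↦
    (hf t (hsub ht)).continuousAt.continuousWithinAt
  have habel := abs_sum_sublevel_mul_sub_integral_le (h := h) (w := fun _ ↦ 1)
    (V := fun t ↦ κ * t) (V' := fun _ ↦ κ) hab (fun t ht ↦ hf t (hsub ht)) (hf'.mono hsub)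
    (fun t _ ↦ by simpa using (hasDerivAt_id t).const_mul κ) continuousOn_const (he.mono hsub)
    (fun t ht ↦ by simpa using hcount t (hsub ht))
  have hmain : ∫ t in a..b, f t * κ = κ * (F b - F a) := by
    rw [intervalIntegral.integral_mul_const, mul_comm,
      intervalIntegral.integral_eq_sub_of_hasDerivAt (fun t ht ↦ hF t (hsub (hu ▸ ht)))
        (hfc.intervalIntegrable_of_Icc hab)]
  have herror : ∫ t in a..b, |f' t| * e t ≤ K * (a ^ (-η) / η) := by
    refine (intervalIntegral.integral_mono_on hab
      (((hf'.abs.mul he).mono hsub).intervalIntegrable_of_Icc hab)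
      ((intervalIntegral.intervalIntegrable_rpow
        (.inr (Set.notMem_uIcc_of_lt ha0 (by linarith)))).const_mul K)
      fun t ht ↦ hf'e t (hsub ht)).trans ?_
    rw [intervalIntegral.integral_const_mul]
    gcongr
    exact integral_rpow_neg_sub_one_le hη ha0 hab
  have hbη : K * b ^ (-η) ≤ K * a ^ (-η) :=
    mul_le_mul_of_nonneg_left (Real.rpow_le_rpow_of_nonpos ha0 hab (by linarith)) hK
  simp only [one_mul, hmain] at habel
  linarith [hfe a ha, hfe b hb,
    show K * (2 + 1 / η) * a ^ (-η) = 2 * (K * a ^ (-η)) + K * (a ^ (-η) / η) by ring]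

theorem HasLinearCount.exists_abs_sum_sub_le {κ η : ℝ} (hcount : HasLinearCount h κ η)
    (hη : 0 < η) {f f' F : ℝ → ℝ} {K : ℝ} (hF : ∀ t ≥ 1, HasDerivAt F (f t) t)
    (hf : ∀ t ≥ 1, HasDerivAt f (f' t) t) (hf' : ContinuousOn f' (Set.Ici 1))
    (hfK : ∀ t ≥ 1, |f t| ≤ K * t ^ (η - 1)) (hf'K : ∀ t ≥ 1, |f' t| ≤ K * t ^ (η - 2)) :
    ∃ c C, ∀ y ≥ 1, |∑ i ∈ sublevel h y, f (h i) - κ * F y - c| ≤ C * y ^ (-η) := by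
  obtain ⟨C, hC⟩ := hcount
  have hC0 : 0 ≤ C := by simpa using (abs_nonneg _).trans (hC 1 le_rfl)
  have herror {t r x : ℝ} (ht : 1 ≤ t) (hx : |x| ≤ K * t ^ r) :
      |x| * (C * t ^ (1 - 2 * η)) ≤ K * C * t ^ (r + (1 - 2 * η)) := by
    have ht0 : 0 < t := by linarith
    rw [Real.rpow_add ht0, ← mul_mul_mul_comm]
    gcongr
  have hincrement (a b : ℝ) (ha : 1 ≤ a) (hab : a ≤ b) :
      dist (∑ i ∈ sublevel h b, f (h i) - κ * F b) (∑ i ∈ sublevel h a, f (h i) - κ * F a) ≤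
        K * C * (2 + 1 / η) * a ^ (-η) := by
    have he : ContinuousOn (fun t : ℝ ↦ C * t ^ (1 - 2 * η)) (Set.Ici 1) :=
      continuousOn_const.mul (continuousOn_id.rpow_const fun t ht ↦
        .inl (zero_lt_one.trans_le ht).ne')
    rw [Real.dist_eq, sub_sub_sub_comm, ← mul_sub]
    exact abs_sum_sublevel_sub_mul_sub_le hη hC he hF hf hf'
      (fun t ht ↦ (herror ht (hfK t ht)).trans_eq (by ring_nf))
      (fun t ht ↦ (herror ht (hf'K t ht)).trans_eq (by ring_nf)) ha hab
  obtain ⟨c, hc⟩ := exists_dist_le_of_tendsto_zero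
    (by simpa using (tendsto_rpow_neg_atTop hη).const_mul (K * C * (2 + 1 / η))) hincrement
  exact ⟨c, _, hc⟩

theorem abs_log_add_le_mul_rpow {y ε : ℝ} (hy : 1 ≤ y) (hε : 0 < ε) (a : ℝ) :
    |Real.log y + a| ≤ (1 / ε + |a|) * y ^ ε := by
  have hlog := Real.log_le_rpow_div (zero_le_one.trans hy) hε
  calc |Real.log y + a| ≤ |Real.log y| + |a| := abs_add_le _ _
    _ = Real.log y + |a| := by rw [abs_of_nonneg (Real.log_nonneg hy)]
    _ ≤ y ^ ε / ε + |a| * y ^ ε :=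
        add_le_add hlog (le_mul_of_one_le_right (abs_nonneg a) (Real.one_le_rpow hy hε.le))
    _ = (1 / ε + |a|) * y ^ ε := by ring

theorem HasLinearCount.exists_abs_sum_inv_sub_le {κ η : ℝ} (hcount : HasLinearCount h κ η)
    (hη : 0 < η) :
    ∃ γ C, ∀ y ≥ 1, |∑ i ∈ sublevel h y, (h i)⁻¹ - κ * Real.log y - γ| ≤ C * y ^ (-η) := by
  refine hcount.exists_abs_sum_sub_le (K := 1) hη (f' := fun t ↦ -(t ^ 2)⁻¹)
    (fun t ht ↦ Real.hasDerivAt_log (by positivity)) (fun t ht ↦ hasDerivAt_inv (by positivity))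
    (ContinuousOn.neg (ContinuousOn.inv₀ (by fun_prop) fun t ht ↦ ?_))
    (fun t ht ↦ ?_) (fun t ht ↦ ?_)
  · have : (0 : ℝ) < t := zero_lt_one.trans_le ht
    positivity
  · rw [abs_of_pos (by positivity), one_mul, ← Real.rpow_neg_one]
    exact Real.rpow_le_rpow_of_exponent_le ht (by linarith)
  · rw [abs_neg, abs_of_pos (by positivity), one_mul, ← Real.rpow_natCast, ← Real.rpow_neg]
    exacts [Real.rpow_le_rpow_of_exponent_le ht (by push_cast; linarith), by positivity]

theorem HasLinearCount.exists_abs_sum_log_div_sub_log_sq_le {κ η : ℝ}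
    (hcount : HasLinearCount h κ η) (hη : 0 < η) :
    ∃ c C, ∀ y ≥ 1, |∑ i ∈ sublevel h y, Real.log (h i) / h i - κ * (Real.log y ^ 2 / 2) - c|
      ≤ C * y ^ (-η) := by
  have hone_add_log (t : ℝ) (ht : 1 ≤ t) : 1 + Real.log t ≤ (1 + 1 / η) * t ^ η := by
    simpa only [abs_one, add_comm] using (le_abs_self _).trans (abs_log_add_le_mul_rpow ht hη 1)
  refine hcount.exists_abs_sum_sub_le (f := fun t ↦ Real.log t / t) (K := 1 + 1 / η) hη
    (f' := fun t ↦ (1 - Real.log t) / t ^ 2)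
    (fun t ht ↦ ?_) (fun t ht ↦ ?_)
    (ContinuousOn.div (continuousOn_const.sub (Real.continuousOn_log.mono ?_)) (by fun_prop) ?_)
    (fun t ht ↦ ?_) (fun t ht ↦ ?_)
  · have := ((Real.hasDerivAt_log (x := t) (by positivity)).pow 2).div_const 2
    convert! this using 1
    push_cast
    ring
  · have := (Real.hasDerivAt_log (x := t) (by positivity)).div (hasDerivAt_id t) (by positivity)
    convert! this using 1
    simp only [id]
    field_simp
  · exact fun t ht ↦ (zero_lt_one.trans_le ht).ne'
  · exact fun t ht ↦ (pow_pos (zero_lt_one.trans_le ht) 2).ne'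
  · have hlog := Real.log_nonneg ht
    have ht0 : 0 < t := by linarith
    rw [abs_of_nonneg (by positivity), Real.rpow_sub_one ht0.ne', ← mul_div_assoc]
    gcongr
    linarith [hone_add_log t ht]
  · have hlog := Real.log_nonneg ht
    have ht0 : 0 < t := by linarith
    rw [abs_div, abs_of_pos (by positivity : 0 < t ^ 2), Real.rpow_sub ht0, ← mul_div_assoc,
      Real.rpow_two]
    gcongr
    exact (abs_le.2 ⟨by linarith, by linarith⟩).trans (hone_add_log t ht)

theorem HasLinearCount.exists_abs_sum_rpow_sub_one_sub_le {κ η r : ℝ}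
    (hcount : HasLinearCount h κ η) (hη : 0 < η) (hr : r ≤ η) (hr0 : r ≠ 0) :
    ∃ C, ∀ y ≥ 1, |∑ i ∈ sublevel h y, h i ^ (r - 1) - κ * (y ^ r / r)| ≤ C := by
  have hpow_le {t s : ℝ} (ht : 1 ≤ t) : t ^ (r - s) ≤ t ^ (η - s) :=
    Real.rpow_le_rpow_of_exponent_le ht (by linarith)
  obtain ⟨c, C, hC⟩ : ∃ c C, ∀ y ≥ 1,
      |∑ i ∈ sublevel h y, h i ^ (r - 1) - κ * (y ^ r / r) - c| ≤ C * y ^ (-η) := by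
    refine hcount.exists_abs_sum_sub_le (f := fun t ↦ t ^ (r - 1)) (F := fun t ↦ t ^ r / r)
      (f' := fun t ↦ (r - 1) * t ^ (r - 2)) (K := 1 + |r - 1|) hη (fun t ht ↦ ?_)
      (fun t ht ↦ ?_) (continuousOn_const.mul (continuousOn_id.rpow_const ?_))
      (fun t ht ↦ ?_) (fun t ht ↦ ?_)
    · have := (Real.hasDerivAt_rpow_const (x := t) (p := r) (.inl (by positivity))).div_const r
      rwa [mul_div_cancel_left₀ _ hr0] at this
    · convert! Real.hasDerivAt_rpow_const (x := t) (p := r - 1) (.inl (by positivity)) using 1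
      ring_nf
    · exact fun t ht ↦ .inl (zero_lt_one.trans_le ht).ne'
    · rw [abs_of_pos (by positivity)]
      exact (hpow_le ht).trans
        (le_mul_of_one_le_left (by positivity) (by linarith [abs_nonneg (r - 1)]))
    · rw [abs_mul, abs_of_pos (by positivity : 0 < t ^ (r - 2))]
      gcongr
      linarith
  refine ⟨C + |c|, fun y hy ↦ ?_⟩
  have hC0 : 0 ≤ C := by simpa using (abs_nonneg _).trans (hC 1 le_rfl)
  have hy1 : C * y ^ (-η) ≤ C := mul_le_of_le_one_right hC0
    (Real.rpow_le_one_of_one_le_of_nonpos hy (by linarith))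
  rw [← sub_add_cancel (_ - κ * _) c]
  exact (abs_add_le _ _).trans (by linarith [hC y hy])

theorem sum_log_div_sub_eq (a b y : ℝ) :
    ∑ i ∈ sublevel h y, (Real.log (h i) / h i -
        ((Real.log y - Real.log (h i) + a) / h i + b / y)) =
      2 * ∑ i ∈ sublevel h y, Real.log (h i) / h i
        - (Real.log y + a) * ∑ i ∈ sublevel h y, (h i)⁻¹ - b * ((sublevel h y).card / y) := by
  simp only [Finset.mul_sum, Finset.card_eq_sum_ones, Nat.cast_sum, Finset.sum_div,
    ← Finset.sum_sub_distrib]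
  refine Finset.sum_congr rfl fun i _ ↦ ?_
  push_cast
  ring

/-- The constants `a` and `b` cancel the main terms of `∑ log h / h`, `∑ 1 / h` and `∑ 1`. -/
theorem HasLinearCount.exists_abs_sum_log_div_sub_le {κ η : ℝ} (hcount : HasLinearCount h κ η)
    (hκ : κ ≠ 0) (hη : 0 < η) :
    ∃ a b C, ∀ y ≥ 1, |∑ i ∈ sublevel h y, (Real.log (h i) / h i -
      ((Real.log y - Real.log (h i) + a) / h i + b / y))| ≤ C * y ^ (-(η / 2)) := by
  obtain ⟨γ, C₁, hinv⟩ := hcount.exists_abs_sum_inv_sub_le hη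
  obtain ⟨c, C₂, hlogdiv⟩ := hcount.exists_abs_sum_log_div_sub_log_sq_le hη
  obtain ⟨C₃, hcard⟩ := hcount
  obtain ⟨a, haκ⟩ : ∃ a, a * κ = -γ := ⟨_, div_mul_cancel₀ _ hκ⟩
  obtain ⟨b, hbκ⟩ : ∃ b, b * κ = 2 * c - a * γ := ⟨_, div_mul_cancel₀ _ hκ⟩
  refine ⟨a, b, 2 * C₂ + (1 / (η / 2) + |a|) * C₁ + |b| * C₃, fun y hy ↦ ?_⟩
  rw [sum_log_div_sub_eq]
  set L := ∑ i ∈ sublevel h y, Real.log (h i) / h i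
  set H := ∑ i ∈ sublevel h y, (h i)⁻¹
  set n : ℝ := ((sublevel h y).card : ℝ)
  have hy0 : 0 < y := by linarith
  have hC₂ : 0 ≤ C₂ := by simpa using (abs_nonneg _).trans (hlogdiv 1 le_rfl)
  have hC₃ : 0 ≤ C₃ := by simpa using (abs_nonneg _).trans (hcard 1 le_rfl)
  have hL : |L - κ * (Real.log y ^ 2 / 2) - c| ≤ C₂ * y ^ (-(η / 2)) :=
    (hlogdiv y hy).trans (by gcongr; linarith)
  have hH : |(Real.log y + a) * (H - κ * Real.log y - γ)| ≤
      (1 / (η / 2) + |a|) * C₁ * y ^ (-(η / 2)) := by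
    rw [abs_mul]
    refine (mul_le_mul (abs_log_add_le_mul_rpow hy (half_pos hη) a) (hinv y hy)
      (abs_nonneg _) (by positivity)).trans_eq ?_
    rw [mul_mul_mul_comm, ← Real.rpow_add hy0]
    ring_nf
  have hn : |b * (n / y - κ)| ≤ |b| * C₃ * y ^ (-(η / 2)) := by
    rw [abs_mul, mul_assoc, div_sub' hy0.ne', abs_div, abs_of_pos hy0, mul_comm y κ]
    gcongr
    rw [div_le_iff₀ hy0, mul_assoc, ← Real.rpow_add_one hy0.ne']
    exact (hcard y hy).trans (by gcongr; linarith)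
  have hsplit : 2 * L - (Real.log y + a) * H - b * (n / y) =
      2 * (L - κ * (Real.log y ^ 2 / 2) - c) - (Real.log y + a) * (H - κ * Real.log y - γ)
        - b * (n / y - κ) := by
    linear_combination (-Real.log y) * haκ - hbκ
  rw [hsplit]
  rw [abs_le] at *
  constructor <;> linarith

theorem HasLinearCount.exists_abs_sum_div_mul_le {κ η δ C : ℝ} (hcount : HasLinearCount h κ η)
    (hη : 0 < η) (hδ : 0 < δ) (hδη : δ ≤ η) (hpos : ∀ i, 0 < h i) {G : ℝ → ℝ}
    (hG : ∀ y ≥ 1, |G y| ≤ C * y ^ (-δ)) :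
    ∃ D, ∀ f : ι → ℝ, (∀ i, |f i| ≤ 1) →
      ∀ x ≥ 1, |∑ i ∈ sublevel h x, f i / h i * G (x / h i)| ≤ D := by
  obtain ⟨D, hD⟩ := hcount.exists_abs_sum_rpow_sub_one_sub_le hη hδη hδ.ne'
  have hC : 0 ≤ C := by simpa using (abs_nonneg _).trans (hG 1 le_rfl)
  have hD0 : 0 ≤ D := (abs_nonneg _).trans (hD 1 le_rfl)
  refine ⟨C * (κ / δ + D), fun f hf x hx ↦ ?_⟩
  have hx0 : 0 < x := by linarith
  have hterm (i) (hi : i ∈ sublevel h x) :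
      |f i / h i * G (x / h i)| ≤ C * x ^ (-δ) * h i ^ (δ - 1) := by
    have hi0 := hpos i
    calc |f i / h i * G (x / h i)| ≤ 1 / h i * (C * (x / h i) ^ (-δ)) := by
          rw [abs_mul, abs_div, abs_of_pos hi0]
          gcongr
          exacts [hf i, hG _ ((one_le_div hi0).2 (mem_sublevel.1 hi))]
      _ = C * x ^ (-δ) * h i ^ (δ - 1) := by
          rw [Real.div_rpow hx0.le hi0.le, Real.rpow_neg hi0.le, Real.rpow_sub_one hi0.ne']
          field_simp
  calc |∑ i ∈ sublevel h x, f i / h i * G (x / h i)|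
      ≤ C * x ^ (-δ) * ∑ i ∈ sublevel h x, h i ^ (δ - 1) := by
        rw [Finset.mul_sum]
        exact (Finset.abs_sum_le_sum_abs _ _).trans (Finset.sum_le_sum hterm)
    _ ≤ C * x ^ (-δ) * (κ * (x ^ δ / δ) + D * x ^ δ) := by
        gcongr
        linarith [(abs_le.1 (hD x hx)).2, le_mul_of_one_le_right hD0 (Real.one_le_rpow hx hδ.le)]
    _ = C * (κ / δ + D) := by
        rw [Real.rpow_neg hx0.le]
        field_simp

theorem HasLinearCount.summable_rpow_sub_one {κ η r : ℝ} (hcount : HasLinearCount h κ η)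
    (hη : 0 < η) (hr : r < 0) (hpos : ∀ i, 0 ≤ h i) : Summable fun i ↦ h i ^ (r - 1) := by
  obtain ⟨C, hC⟩ := hcount.exists_abs_sum_rpow_sub_one_sub_le hη (hr.le.trans hη.le) hr.ne
  refine summable_of_sum_le (c := C + |κ / r|) (fun i ↦ Real.rpow_nonneg (hpos i) _) fun s ↦ ?_
  obtain ⟨M, hM⟩ := (s.image h).exists_le
  have hy : 1 ≤ max 1 M := le_max_left 1 M
  have hsub : s ⊆ sublevel h (max 1 M) := fun i hi ↦
    mem_sublevel.2 ((hM _ (Finset.mem_image_of_mem h hi)).trans (le_max_right 1 M))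
  have hmain : κ * ((max 1 M) ^ r / r) ≤ |κ / r| := by
    rw [← mul_div_assoc, mul_div_right_comm]
    refine (le_abs_self _).trans ?_
    rw [abs_mul]
    refine mul_le_of_le_one_right (abs_nonneg _) ?_
    rw [abs_of_nonneg (by positivity)]
    exact Real.rpow_le_one_of_one_le_of_nonpos hy hr.le
  calc ∑ i ∈ s, h i ^ (r - 1) ≤ ∑ i ∈ sublevel h (max 1 M), h i ^ (r - 1) :=
        Finset.sum_le_sum_of_subset_of_nonneg hsub fun i _ _ ↦ Real.rpow_nonneg (hpos i) _
    _ ≤ C + |κ / r| := by linarith [(abs_le.1 (hC _ hy)).2]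

end Summatory

section Dilogarithm

/-- The dilogarithm `Li₂`. The summation index is shifted by one, and the value is meaningful for
`|z| ≤ 1`, where the series converges. -/
def dilog (z : ℝ) : ℝ := ∑' n : ℕ, z ^ (n + 1) / ((n : ℝ) + 1) ^ 2

theorem hasSum_one_div_add_one_sq :
    HasSum (fun n : ℕ ↦ 1 / ((n : ℝ) + 1) ^ 2) (Real.pi ^ 2 / 6) := by
  simpa using (hasSum_nat_add_iff' 1).2 hasSum_zeta_two

theorem dilog_zero : dilog 0 = 0 := by
  simp [dilog]

theorem dilog_one : dilog 1 = Real.pi ^ 2 / 6 := by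
  simpa [dilog] using hasSum_one_div_add_one_sq.tsum_eq

theorem norm_dilog_term_le {z : ℝ} (hz0 : 0 ≤ z) (hz1 : z ≤ 1) (n : ℕ) :
    ‖z ^ (n + 1) / ((n : ℝ) + 1) ^ 2‖ ≤ z * (1 / ((n : ℝ) + 1) ^ 2) := by
  rw [Real.norm_of_nonneg (by positivity), pow_succ', mul_div_assoc]
  gcongr
  exact pow_le_one₀ hz0 hz1

theorem abs_dilog_le {z : ℝ} (hz0 : 0 ≤ z) (hz1 : z ≤ 1) :
    |dilog z| ≤ z * (Real.pi ^ 2 / 6) :=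
  tsum_of_norm_bounded (hasSum_one_div_add_one_sq.mul_left z) (norm_dilog_term_le hz0 hz1)

theorem continuousOn_dilog : ContinuousOn dilog (Set.Icc 0 1) :=
  continuousOn_tsum (fun n ↦ by fun_prop) hasSum_one_div_add_one_sq.summable fun n z hz ↦
    (norm_dilog_term_le hz.1 hz.2 n).trans (mul_le_of_le_one_left (by positivity) hz.2)

theorem hasSum_pow_div_add_one {z : ℝ} (hz0 : 0 < z) (hz1 : z < 1) :
    HasSum (fun n : ℕ ↦ z ^ n / ((n : ℝ) + 1)) (-Real.log (1 - z) / z) := by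
  refine ((Real.hasSum_pow_div_log_of_abs_lt_one
    ((abs_of_pos hz0).trans_lt hz1)).div_const z).congr_fun fun n ↦ ?_
  rw [pow_succ]
  field_simp

theorem hasDerivAt_dilog {z : ℝ} (hz0 : 0 < z) (hz1 : z < 1) :
    HasDerivAt dilog (-Real.log (1 - z) / z) z := by
  obtain ⟨r, hzr, hr1⟩ := exists_between hz1
  have hr0 : 0 < r := hz0.trans hzr
  have hterm (n : ℕ) (y : ℝ) : HasDerivAt (fun y : ℝ ↦ y ^ (n + 1) / ((n : ℝ) + 1) ^ 2)
      (y ^ n / ((n : ℝ) + 1)) y := by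
    convert! (hasDerivAt_pow (n + 1) y).div_const (((n : ℝ) + 1) ^ 2) using 1
    push_cast
    field_simp
  rw [← (hasSum_pow_div_add_one hz0 hz1).tsum_eq]
  refine hasDerivAt_tsum_of_isPreconnected (summable_geometric_of_lt_one hr0.le hr1)
    isOpen_Ioo isPreconnected_Ioo (fun n y _ ↦ hterm n y) (fun n y hy ↦ ?_)
    (⟨hz0, hzr⟩ : z ∈ Set.Ioo 0 r)
    (.of_norm_bounded (hasSum_one_div_add_one_sq.summable.mul_left z)
      (norm_dilog_term_le hz0.le hz1.le)) ⟨hz0, hzr⟩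
  have hy0 : 0 ≤ y := hy.1.le
  rw [Real.norm_of_nonneg (by positivity)]
  exact (div_le_self (by positivity) (by simp)).trans (pow_le_pow_left₀ hy0 hy.2.le n)

theorem tendsto_log_mul_log_one_sub :
    Tendsto (fun z ↦ Real.log z * Real.log (1 - z)) (𝓝[>] 0) (𝓝 0) := by
  have hderiv : HasDerivAt (fun z : ℝ ↦ Real.log (1 - z)) (-1) 0 := by
    simpa using ((hasDerivAt_id (0 : ℝ)).const_sub 1).log (by simp)
  have hO : (fun z : ℝ ↦ Real.log (1 - z)) =O[𝓝[>] 0] fun z ↦ z := by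
    simpa using hderiv.isBigO_sub.mono nhdsWithin_le_nhds
  refine ((isBigO_refl Real.log _).mul hO).trans_tendsto ?_
  simpa using tendsto_log_mul_rpow_nhdsGT_zero one_pos

theorem hasDerivAt_dilog_reflection {z : ℝ} (hz : z ∈ Set.Ioo (0 : ℝ) 1) :
    HasDerivAt (fun z ↦ dilog z + dilog (1 - z) + Real.log z * Real.log (1 - z)) 0 z := by
  have hz0 : z ≠ 0 := hz.1.ne'
  have hz1 : 1 - z ≠ 0 := (sub_pos.2 hz.2).ne'
  have hsub : HasDerivAt (fun z : ℝ ↦ 1 - z) (-1) z := (hasDerivAt_id z).const_sub 1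
  convert! ((hasDerivAt_dilog hz.1 hz.2).add ((hasDerivAt_dilog (sub_pos.2 hz.2)
    (by linarith [hz.1])).comp z hsub)).add ((Real.hasDerivAt_log hz0).mul (hsub.log hz1)) using 1
  rw [sub_sub_cancel]
  field_simp
  ring

theorem dilog_add_dilog_one_sub {z : ℝ} (hz : z ∈ Set.Ioo (0 : ℝ) 1) :
    dilog z + dilog (1 - z) = Real.pi ^ 2 / 6 - Real.log z * Real.log (1 - z) := by
  set Λ : ℝ → ℝ := fun z ↦ dilog z + dilog (1 - z) + Real.log z * Real.log (1 - z)
  have hIoo : ∀ᶠ y in 𝓝[>] (0 : ℝ), y ∈ Set.Ioo (0 : ℝ) 1 := Ioo_mem_nhdsGT one_pos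
  have hconst : ∀ᶠ y in 𝓝[>] 0, Λ y = Λ z := hIoo.mono fun y hy ↦
    isOpen_Ioo.is_const_of_deriv_eq_zero isPreconnected_Ioo
      (fun x hx ↦ (hasDerivAt_dilog_reflection hx).differentiableAt.differentiableWithinAt)
      (fun x hx ↦ (hasDerivAt_dilog_reflection hx).deriv) hy hz
  have hzero : Tendsto dilog (𝓝[>] 0) (𝓝 0) := by
    simpa only [dilog_zero] using (continuousOn_dilog 0 (by simp)).tendsto.mono_left
      (nhdsWithin_le_iff.2 (hIoo.mono fun y hy ↦ Set.Ioo_subset_Icc_self hy))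
  have hone : Tendsto (fun y ↦ dilog (1 - y)) (𝓝[>] 0) (𝓝 (Real.pi ^ 2 / 6)) := by
    refine dilog_one ▸ (continuousOn_dilog 1 (by simp)).tendsto.comp
      (tendsto_nhdsWithin_iff.2 ⟨?_, hIoo.mono fun y hy ↦ ?_⟩)
    · exact (Continuous.tendsto' (by fun_prop) 0 1 (by simp)).mono_left nhdsWithin_le_nhds
    · exact ⟨by linarith [hy.2], by linarith [hy.1]⟩
  have hlim : Tendsto Λ (𝓝[>] 0) (𝓝 (Real.pi ^ 2 / 6)) := by
    simpa using (hzero.add hone).add tendsto_log_mul_log_one_sub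
  have hvalue : Λ z = Real.pi ^ 2 / 6 :=
    tendsto_nhds_unique (tendsto_const_nhds.congr' (hconst.mono fun _ ↦ Eq.symm)) hlim
  linarith

end Dilogarithm

section PairSum

variable {ι : Type*} {h w : ι → ℝ} [Northcott h] {A C δ : ℝ}

theorem sublevel_eq_empty {u : ℝ} (hu : ∀ i, u < h i) : sublevel h u = ∅ := by
  ext i
  simpa using hu i

/-- The weights of the indices of height at most `u` sum to `log u + A + O(1 / u)`, uniformly in
`u ≥ δ`. -/
def HasLogSum (h w : ι → ℝ) [Northcott h] (δ A C : ℝ) : Prop :=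
  ∀ u ≥ δ, |∑ i ∈ sublevel h u, w i - (Real.log u + A)| ≤ C * u⁻¹

theorem HasLogSum.const_nonneg (hlog : HasLogSum h w δ A C) (hδ : 0 < δ) : 0 ≤ C :=
  nonneg_of_mul_nonneg_left ((abs_nonneg _).trans (hlog δ le_rfl)) (inv_pos.2 hδ)

theorem HasLogSum.tendsto (hlog : HasLogSum h w δ A C) :
    Tendsto (fun u ↦ ∑ i ∈ sublevel h u, w i - Real.log u) atTop (𝓝 A) := by
  rw [tendsto_iff_dist_tendsto_zero]
  refine squeeze_zero' (.of_forall fun _ ↦ dist_nonneg) ?_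
    (by simpa using tendsto_inv_atTop_zero.const_mul C)
  filter_upwards [eventually_ge_atTop δ] with u hu
  simpa only [Real.dist_eq, sub_sub] using hlog u hu

theorem exists_hasLogSum_of_abs_sum_mul_sub_le (hδ : 0 < δ) (hh : ∀ i, h i ≠ 0)
    (hlinear : ∀ u ≥ δ, |∑ i ∈ sublevel h u, w i * h i - u| ≤ C) :
    ∃ A, HasLogSum h w δ A (2 * C) := by
  have hincrement (a b : ℝ) (ha : δ ≤ a) (hab : a ≤ b) :
      dist (∑ i ∈ sublevel h b, w i - Real.log b) (∑ i ∈ sublevel h a, w i - Real.log a) ≤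
        2 * C * a⁻¹ := by
    have ha0 : 0 < a := hδ.trans_le ha
    have hb0 : 0 < b := ha0.trans_le hab
    have hne : ∀ t ∈ Set.Icc a b, t ≠ 0 := fun t ht ↦ (ha0.trans_le ht.1).ne'
    have hsq : ContinuousOn (fun t : ℝ ↦ (t ^ 2)⁻¹) (Set.Icc a b) :=
      (continuousOn_id.pow 2).inv₀ fun t ht ↦ pow_ne_zero 2 (hne t ht)
    have hprim : ∫ t in a..b, (t ^ 2)⁻¹ = a⁻¹ - b⁻¹ := by
      rw [intervalIntegral.integral_eq_sub_of_hasDerivAt (f := fun t ↦ -t⁻¹)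
        (fun t ht ↦ by simpa using (hasDerivAt_inv (hne t (Set.uIcc_of_le hab ▸ ht))).fun_neg)
        (hsq.intervalIntegrable_of_Icc hab)]
      ring
    have habel := abs_sum_sublevel_mul_sub_integral_le (w := fun i ↦ w i * h i) (e := fun _ ↦ C)
      hab (fun t ht ↦ hasDerivAt_inv (hne t ht)) hsq.neg (fun t _ ↦ hasDerivAt_id t)
      continuousOn_const continuousOn_const (fun t ht ↦ hlinear t (ha.trans ht.1))
    simp only [mul_inv_cancel_right₀ (hh _), mul_one, abs_neg, abs_inv, abs_pow, sq_abs,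
      abs_of_pos ha0, abs_of_pos hb0, intervalIntegral.integral_mul_const, hprim,
      integral_inv_of_pos ha0 hb0, Real.log_div hb0.ne' ha0.ne'] at habel
    rw [Real.dist_eq, sub_sub_sub_comm]
    linarith
  obtain ⟨A, hA⟩ := exists_dist_le_of_tendsto_zero
    (by simpa using tendsto_inv_atTop_zero.const_mul (2 * C)) hincrement
  exact ⟨A, fun u hu ↦ by simpa only [Real.dist_eq, sub_sub] using hA u hu⟩

theorem HasLogSum.abs_sum_mul_sub_integral_le (hlog : HasLogSum h w δ A C) (hδ : 0 < δ)
    (hh : ∀ i, δ < h i) {g g' : ℝ → ℝ} {b : ℝ} (hb : δ ≤ b)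
    (hg : ∀ t ∈ Set.Icc δ b, HasDerivAt g (g' t) t) (hg' : ContinuousOn g' (Set.Icc δ b)) :
    |∑ i ∈ sublevel h b, w i * g (h i) - ∫ t in δ..b, g t * t⁻¹| ≤
      C * (|g b| * b⁻¹ + |g δ| * δ⁻¹ + ∫ t in δ..b, |g' t| * t⁻¹) := by
  have hne : ∀ t ∈ Set.Icc δ b, t ≠ 0 := fun t ht ↦ (hδ.trans_le ht.1).ne'
  have hinv : ContinuousOn (fun t : ℝ ↦ t⁻¹) (Set.Icc δ b) := continuousOn_id.inv₀ hne
  have habel := abs_sum_sublevel_mul_sub_integral_le hb hg hg'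
    (fun t ht ↦ (Real.hasDerivAt_log (hne t ht)).add_const A) hinv
    (continuousOn_const.fun_mul hinv) (fun t ht ↦ hlog t ht.1)
  simp only [sublevel_eq_empty hh, Finset.sum_empty, sub_zero, mul_left_comm _ C,
    intervalIntegral.integral_const_mul] at habel
  linarith

variable {V : ℝ}

theorem log_sub_eq_log_add_log_one_sub_div {t : ℝ} (ht : t < V) (hV : 0 < V) :
    Real.log (V - t) = Real.log V + Real.log (1 - t / V) := by
  rw [← Real.log_mul hV.ne' (sub_pos.2 ((div_lt_one hV).2 ht)).ne', mul_sub, mul_one,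
    mul_div_cancel₀ _ hV.ne']

theorem hasDerivAt_log_one_sub_div {t : ℝ} (ht : t < V) (hV : 0 < V) :
    HasDerivAt (fun t ↦ Real.log (1 - t / V)) (-(V - t)⁻¹) t := by
  have hpos : 0 < 1 - t / V := sub_pos.2 ((div_lt_one hV).2 ht)
  convert! (((hasDerivAt_id t).div_const V).const_sub 1).log hpos.ne' using 1
  have : V - t ≠ 0 := (sub_pos.2 ht).ne'
  simp only [id]
  field_simp

theorem continuousOn_inv_sub (hδ : 0 < δ) :
    ContinuousOn (fun t ↦ (V - t)⁻¹) (Set.Icc δ (V - δ)) :=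
  (continuousOn_const.fun_sub continuousOn_id).inv₀ fun t ht ↦ by
    rw [id]
    linarith [ht.2]

theorem integral_inv_sub_mul_inv_le (hδ : 0 < δ) (hV : 2 * δ ≤ V) :
    ∫ t in δ..(V - δ), (V - t)⁻¹ * t⁻¹ ≤ 2 * (Real.log (V / δ) / V) := by
  have hV0 : 0 < V := by linarith
  have hVδ : 0 < V - δ := by linarith
  have hab : δ ≤ V - δ := by linarith
  have hderiv : ∀ t ∈ Set.uIcc δ (V - δ),
      HasDerivAt (fun t ↦ (Real.log t - Real.log (V - t)) / V) ((V - t)⁻¹ * t⁻¹) t := by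
    intro t ht
    rw [Set.uIcc_of_le hab] at ht
    have ht0 : t ≠ 0 := (hδ.trans_le ht.1).ne'
    have htV : V - t ≠ 0 := by linarith [ht.2]
    convert! ((Real.hasDerivAt_log ht0).sub
      (((hasDerivAt_id t).const_sub V).log htV)).div_const V using 1
    simp only [id]
    field_simp
    ring
  have hcont : ContinuousOn (fun t ↦ (V - t)⁻¹ * t⁻¹) (Set.Icc δ (V - δ)) :=
    (continuousOn_inv_sub hδ).mul (continuousOn_id.inv₀ fun t ht ↦ (hδ.trans_le ht.1).ne')
  rw [intervalIntegral.integral_eq_sub_of_hasDerivAt hderiv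
    (hcont.intervalIntegrable_of_Icc hab), sub_sub_cancel, ← sub_div, ← mul_div_assoc,
    Real.log_div hV0.ne' hδ.ne']
  gcongr
  linarith [Real.log_le_log hVδ (sub_le_self V hδ.le)]

theorem integral_log_one_sub_div (hδ : 0 < δ) (hV : 2 * δ ≤ V) :
    ∫ t in δ..(V - δ), Real.log (1 - t / V) * t⁻¹ =
      2 * dilog (δ / V) + Real.log (δ / V) * Real.log (1 - δ / V) - Real.pi ^ 2 / 6 := by
  have hV0 : 0 < V := by linarith
  have hab : δ ≤ V - δ := by linarith
  have hpos (t) (ht : t ∈ Set.Icc δ (V - δ)) : 0 < t ∧ t < V :=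
    ⟨hδ.trans_le ht.1, by linarith [ht.2]⟩
  have hderiv : ∀ t ∈ Set.uIcc δ (V - δ),
      HasDerivAt (fun t ↦ -dilog (t / V)) (Real.log (1 - t / V) * t⁻¹) t := by
    intro t ht
    obtain ⟨ht0, htV⟩ := hpos t (Set.uIcc_of_le hab ▸ ht)
    convert! ((hasDerivAt_dilog (div_pos ht0 hV0) ((div_lt_one hV0).2 htV)).comp t
      ((hasDerivAt_id t).div_const V)).fun_neg using 1
    field_simp
  have hcont : ContinuousOn (fun t ↦ Real.log (1 - t / V) * t⁻¹) (Set.Icc δ (V - δ)) :=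
    ContinuousOn.mul (fun t ht ↦ (hasDerivAt_log_one_sub_div (hpos t ht).2
      hV0).continuousAt.continuousWithinAt)
      (continuousOn_id.inv₀ fun t ht ↦ (hpos t ht).1.ne')
  have hreflection := dilog_add_dilog_one_sub (z := δ / V)
    ⟨div_pos hδ hV0, (div_lt_one hV0).2 (by linarith)⟩
  rw [intervalIntegral.integral_eq_sub_of_hasDerivAt hderiv
    (hcont.intervalIntegrable_of_Icc hab), sub_div, div_self hV0.ne']
  linarith

theorem abs_log_one_sub_le {x : ℝ} (hx0 : 0 ≤ x) (hx : x ≤ 1 / 2) :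
    |Real.log (1 - x)| ≤ 2 * x := by
  have hpos : 0 < 1 - x := by linarith
  rw [abs_of_nonpos (Real.log_nonpos hpos.le (by linarith)), neg_le]
  refine le_trans ?_ (Real.one_sub_inv_le_log_of_pos hpos)
  rw [show 1 - (1 - x)⁻¹ = -(x / (1 - x)) by field_simp; ring, neg_le_neg_iff,
    div_le_iff₀ hpos]
  nlinarith

theorem inv_sub_le_two_mul_inv (hδ : 0 < δ) (hV : 2 * δ ≤ V) : (V - δ)⁻¹ ≤ 2 * V⁻¹ := by
  have hV0 : 0 < V := by linarith
  rw [← div_eq_mul_inv, inv_le_comm₀ (by linarith) (by positivity), inv_div]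
  linarith

theorem log_div_nonneg (hδ : 0 < δ) (hV : 2 * δ ≤ V) : 0 ≤ Real.log (V / δ) :=
  Real.log_nonneg ((one_le_div hδ).2 (by linarith))

theorem abs_log_one_sub_div_le (hδ : 0 < δ) (hV : 2 * δ ≤ V) :
    |Real.log (1 - δ / V)| ≤ 2 * δ * V⁻¹ := by
  have hV0 : 0 < V := by linarith
  refine (abs_log_one_sub_le (div_pos hδ hV0).le ?_).trans_eq (by ring)
  rw [div_le_div_iff₀ hV0 two_pos]
  linarith

theorem abs_integral_log_one_sub_div_add_le (hδ : 0 < δ) (hV : 2 * δ ≤ V) :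
    |(∫ t in δ..(V - δ), Real.log (1 - t / V) * t⁻¹) + Real.pi ^ 2 / 6| ≤
      4 * δ * (1 + Real.log (V / δ)) * V⁻¹ := by
  have hV0 : 0 < V := by linarith
  have hL := log_div_nonneg hδ hV
  have hlog : |Real.log (δ / V)| = Real.log (V / δ) := by
    rw [← inv_div, Real.log_inv, abs_neg, abs_of_nonneg hL]
  have hdilog : |dilog (δ / V)| ≤ 2 * δ * V⁻¹ := by
    refine (abs_dilog_le (div_pos hδ hV0).le ((div_le_one hV0).2 (by linarith))).trans ?_
    have hpi : Real.pi ^ 2 / 6 ≤ 2 := by nlinarith [Real.pi_pos, Real.pi_lt_d2]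
    calc δ / V * (Real.pi ^ 2 / 6) ≤ δ / V * 2 := by gcongr
      _ = 2 * δ * V⁻¹ := by ring
  rw [integral_log_one_sub_div hδ hV, sub_add_cancel]
  calc |2 * dilog (δ / V) + Real.log (δ / V) * Real.log (1 - δ / V)|
      ≤ 2 * |dilog (δ / V)| + |Real.log (δ / V)| * |Real.log (1 - δ / V)| := by
        rw [← abs_mul, ← abs_two (α := ℝ), ← abs_mul, abs_two]
        exact abs_add_le _ _
    _ ≤ 2 * (2 * δ * V⁻¹) + Real.log (V / δ) * (2 * δ * V⁻¹) := by
        rw [hlog]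
        gcongr
        exact abs_log_one_sub_div_le hδ hV
    _ ≤ 4 * δ * (1 + Real.log (V / δ)) * V⁻¹ := by
        have : 0 ≤ δ * Real.log (V / δ) * V⁻¹ := by positivity
        linarith

theorem HasLogSum.abs_sum_mul_log_one_sub_div_add_le (hlog : HasLogSum h w δ A C) (hδ : 0 < δ)
    (hh : ∀ i, δ < h i) (hV : 2 * δ ≤ V) :
    |∑ i ∈ sublevel h (V - δ), w i * Real.log (1 - h i / V) + Real.pi ^ 2 / 6| ≤
      4 * (C + δ) * (1 + Real.log (V / δ)) * V⁻¹ := by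
  have hC := hlog.const_nonneg hδ
  have hV0 : 0 < V := by linarith
  have hab : δ ≤ V - δ := by linarith
  have hL := log_div_nonneg hδ hV
  have habel := hlog.abs_sum_mul_sub_integral_le hδ hh hab
    (fun t ht ↦ hasDerivAt_log_one_sub_div (V := V) (by linarith [ht.2]) hV0)
    (continuousOn_inv_sub hδ).neg
  have hright : |Real.log (1 - (V - δ) / V)| * (V - δ)⁻¹ ≤
      Real.log (V / δ) * (2 * V⁻¹) := by
    rw [sub_div, div_self hV0.ne', sub_sub_cancel, ← inv_div, Real.log_inv, abs_neg,
      abs_of_nonneg hL]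
    gcongr
    exact inv_sub_le_two_mul_inv hδ hV
  have hleft : |Real.log (1 - δ / V)| * δ⁻¹ ≤ 2 * V⁻¹ := by
    rw [← div_eq_mul_inv, div_le_iff₀ hδ]
    linarith [abs_log_one_sub_div_le hδ hV]
  have hderiv : ∫ t in δ..(V - δ), |-(V - t)⁻¹| * t⁻¹ ≤ 2 * (Real.log (V / δ) / V) := by
    refine Eq.trans_le (intervalIntegral.integral_congr fun t ht ↦ ?_)
      (integral_inv_sub_mul_inv_le hδ hV)
    rw [Set.uIcc_of_le hab] at ht
    simp only [abs_neg, abs_of_pos (inv_pos.2 (show 0 < V - t by linarith [ht.2]))]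
  have hCsum := mul_le_mul_of_nonneg_left (add_le_add (add_le_add hright hleft) hderiv) hC
  have hmain := abs_integral_log_one_sub_div_add_le hδ hV
  have hCV : 0 ≤ C * V⁻¹ := by positivity
  rw [← sub_neg_eq_add] at hmain ⊢
  refine (abs_sub_le _ _ _).trans ((add_le_add (habel.trans hCsum) hmain).trans ?_)
  linear_combination 2 * hCV

theorem HasLogSum.sum_mul_inv_sub_le (hlog : HasLogSum h w δ A C) (hδ : 0 < δ)
    (hh : ∀ i, δ < h i) (hV : 2 * δ ≤ V) :
    ∑ i ∈ sublevel h (V - δ), w i * (V - h i)⁻¹ ≤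
      (2 + 4 * (C * δ⁻¹)) * (1 + Real.log (V / δ)) * V⁻¹ := by
  have hC := hlog.const_nonneg hδ
  have hV0 : 0 < V := by linarith
  have hab : δ ≤ V - δ := by linarith
  have hL := log_div_nonneg hδ hV
  have hpos (t) (ht : t ∈ Set.Icc δ (V - δ)) : 0 < V - t := by linarith [ht.2]
  have habel := hlog.abs_sum_mul_sub_integral_le hδ hh (g := fun t ↦ (V - t)⁻¹)
    (g' := fun t ↦ ((V - t)⁻¹) ^ 2) hab
    (fun t ht ↦ by
      simpa [inv_pow] using ((hasDerivAt_id t).const_sub V).fun_inv (hpos t ht).ne')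
    ((continuousOn_inv_sub hδ).pow 2)
  have hmain := integral_inv_sub_mul_inv_le hδ hV
  have hderiv : ∫ t in δ..(V - δ), |((V - t)⁻¹) ^ 2| * t⁻¹ ≤
      δ⁻¹ * (2 * (Real.log (V / δ) / V)) := by
    refine le_trans ?_ (mul_le_mul_of_nonneg_left hmain (inv_nonneg.2 hδ.le))
    have hinv : ContinuousOn (fun t : ℝ ↦ t⁻¹) (Set.Icc δ (V - δ)) :=
      continuousOn_id.inv₀ fun t ht ↦ (hδ.trans_le ht.1).ne'
    rw [← intervalIntegral.integral_const_mul]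
    refine intervalIntegral.integral_mono_on hab
      ((((continuousOn_inv_sub hδ).pow 2).abs.mul hinv).intervalIntegrable_of_Icc hab)
      ((continuousOn_const.mul ((continuousOn_inv_sub hδ).mul
        hinv)).intervalIntegrable_of_Icc hab) fun t ht ↦ ?_
    have ht0 : 0 < t := hδ.trans_le ht.1
    have htV := hpos t ht
    rw [abs_of_nonneg (sq_nonneg _), sq, ← mul_assoc]
    gcongr
    linarith [ht.2]
  have hboundary := mul_le_mul_of_nonneg_left (inv_sub_le_two_mul_inv hδ hV)
    (inv_nonneg.2 hδ.le)
  rw [sub_sub_cancel, abs_of_pos (inv_pos.2 hδ),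
    abs_of_pos (inv_pos.2 (by linarith : 0 < V - δ)), mul_comm _ δ⁻¹] at habel
  have hCsum := mul_le_mul_of_nonneg_left
    (add_le_add (add_le_add hboundary hboundary) hderiv) hC
  have hV_inv : 0 ≤ V⁻¹ := by positivity
  have hCL : 0 ≤ C * δ⁻¹ * Real.log (V / δ) * V⁻¹ := by positivity
  linear_combination (abs_le.1 habel).2 + hmain + hCsum + 2 * hV_inv + 2 * hCL

theorem HasLogSum.abs_sum_sublevel_sub_sub_log_add_le (hlog : HasLogSum h w δ A C)
    (hδ : 0 < δ) (hV : 2 * δ ≤ V) :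
    |∑ i ∈ sublevel h (V - δ), w i - (Real.log V + A)| ≤ 2 * (C + δ) * V⁻¹ := by
  have hC := hlog.const_nonneg hδ
  have hV0 : 0 < V := by linarith
  have hsum := hlog (V - δ) (by linarith)
  rw [log_sub_eq_log_add_log_one_sub_div (by linarith) hV0] at hsum
  have hCV := mul_le_mul_of_nonneg_left (inv_sub_le_two_mul_inv hδ hV) hC
  have hlog_one := abs_log_one_sub_div_le hδ hV
  rw [abs_le] at *
  constructor <;> linarith

theorem sum_sum_sublevel_sub_eq (hδ : 0 ≤ δ) (hh : ∀ i, δ < h i) :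
    ∑ i ∈ sublevel h V, ∑ j ∈ sublevel h (V - h i), w i * w j =
      ∑ i ∈ sublevel h (V - δ), w i * ∑ j ∈ sublevel h (V - h i), w j := by
  simp only [Finset.mul_sum]
  refine (Finset.sum_subset (sublevel_mono (sub_le_self V hδ)) fun i _ hi ↦ ?_).symm
  rw [mem_sublevel, not_le] at hi
  rw [sublevel_eq_empty fun j ↦ by linarith [hh j], Finset.sum_empty]

theorem HasLogSum.abs_sum_sum_sublevel_sub_sub_le (hlog : HasLogSum h w δ A C)
    (hw : ∀ i, 0 ≤ w i) (hδ : 0 < δ) (hh : ∀ i, δ < h i) (hV : 0 < V) :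
    |∑ i ∈ sublevel h V, ∑ j ∈ sublevel h (V - h i), w i * w j -
        ((Real.log V + A) * ∑ i ∈ sublevel h (V - δ), w i +
          ∑ i ∈ sublevel h (V - δ), w i * Real.log (1 - h i / V))| ≤
      C * ∑ i ∈ sublevel h (V - δ), w i * (V - h i)⁻¹ := by
  rw [sum_sum_sublevel_sub_eq hδ.le hh, Finset.mul_sum, Finset.mul_sum,
    ← Finset.sum_add_distrib, ← Finset.sum_sub_distrib]
  refine (Finset.abs_sum_le_sum_abs _ _).trans (Finset.sum_le_sum fun i hi ↦ ?_)
  rw [mem_sublevel] at hi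
  calc |w i * ∑ j ∈ sublevel h (V - h i), w j -
        ((Real.log V + A) * w i + w i * Real.log (1 - h i / V))|
      = w i * |∑ j ∈ sublevel h (V - h i), w j - (Real.log (V - h i) + A)| := by
        rw [log_sub_eq_log_add_log_one_sub_div (by linarith) hV, ← abs_of_nonneg (hw i),
          ← abs_mul, abs_of_nonneg (hw i)]
        ring_nf
    _ ≤ w i * (C * (V - h i)⁻¹) :=
        mul_le_mul_of_nonneg_left (hlog _ (by linarith)) (hw i)
    _ = C * (w i * (V - h i)⁻¹) := mul_left_comm ..

theorem HasLogSum.exists_abs_sum_sum_sub_sq_add_le (hlog : HasLogSum h w δ A C)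
    (hw : ∀ i, 0 ≤ w i) (hδ : 0 < δ) (hh : ∀ i, δ < h i) :
    ∃ K, ∀ V ≥ 2 * δ,
      |∑ i ∈ sublevel h V, ∑ j ∈ sublevel h (V - h i), w i * w j -
        ((Real.log V + A) ^ 2 - Real.pi ^ 2 / 6)| ≤
          K * (|Real.log V + A| + (1 + Real.log (V / δ))) * V⁻¹ := by
  have hC := hlog.const_nonneg hδ
  refine ⟨4 * (C + δ) + C * (2 + 4 * (C * δ⁻¹)), fun V hV ↦ ?_⟩
  have hV0 : 0 < V := by linarith
  have hpairs := hlog.abs_sum_sum_sublevel_sub_sub_le hw hδ hh hV0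
  have htail := mul_le_mul_of_nonneg_left (hlog.sum_mul_inv_sub_le hδ hh hV) hC
  have hdilog := hlog.abs_sum_mul_log_one_sub_div_add_le hδ hh hV
  have hmain := mul_le_mul_of_nonneg_left
    (hlog.abs_sum_sublevel_sub_sub_log_add_le hδ hV) (abs_nonneg (Real.log V + A))
  rw [← abs_mul] at hmain
  have hslack : 0 ≤ (2 * (C + δ) + C * (2 + 4 * (C * δ⁻¹))) * |Real.log V + A| * V⁻¹ := by
    positivity
  rw [abs_le] at hpairs hdilog hmain ⊢
  constructor
  · linear_combination hpairs.1 + hmain.1 + hdilog.1 + htail + hslack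
  · linear_combination hpairs.2 + hmain.2 + hdilog.2 + htail + hslack

theorem HasLogSum.isBigO_sum_sum_sub_sq_add (hlog : HasLogSum h w δ A C)
    (hw : ∀ i, 0 ≤ w i) (hδ : 0 < δ) (hh : ∀ i, δ < h i) :
    (fun V ↦ ∑ i ∈ sublevel h V, ∑ j ∈ sublevel h (V - h i), w i * w j -
      ((Real.log V + A) ^ 2 - Real.pi ^ 2 / 6)) =O[atTop] fun V ↦ Real.log V / V := by
  obtain ⟨K, hK⟩ := hlog.exists_abs_sum_sum_sub_sq_add_le hw hδ hh
  have hconst (c : ℝ) : (fun _ ↦ c) =O[atTop] Real.log := Real.isLittleO_const_log_atTop.isBigO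
  have hshift : (fun V ↦ Real.log (V / δ)) =O[atTop] Real.log := by
    refine ((isBigO_refl Real.log atTop).sub (hconst (Real.log δ))).congr' ?_ .rfl
    filter_upwards [eventually_gt_atTop 0] with V hV
    rw [Real.log_div hV.ne' hδ.ne']
  have hbound : (fun V ↦ K * (|Real.log V + A| + (1 + Real.log (V / δ))) * V⁻¹)
      =O[atTop] fun V ↦ Real.log V / V :=
    ((((isBigO_refl Real.log atTop).add (hconst A)).norm_left.add
      ((hconst 1).add hshift)).const_mul_left K).mul (isBigO_refl _ _)
  refine IsBigO.trans (.of_norm_eventuallyLE ?_) hbound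
  filter_upwards [eventually_ge_atTop (2 * δ)] with V hV using hK V hV

end PairSum

section FreeMonoid

open Finset.HasAntidiagonal (antidiagonal mem_antidiagonal)

variable {P : Type*} (N : P → ℕ)

theorem Nm_zero : Nm N 0 = 1 := Finsupp.prod_zero_index

theorem Nm_add (m n : P →₀ ℕ) : Nm N (m + n) = Nm N m * Nm N n :=
  Finsupp.prod_add_index' (fun _ ↦ pow_zero _) fun _ _ _ ↦ pow_add _ _ _

theorem Nm_single (p : P) (j : ℕ) : Nm N (Finsupp.single p j) = N p ^ j :=
  Finsupp.prod_single_index (pow_zero _)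

variable {N}

theorem Nm_pos (hN : ∀ p, 0 < N p) (m : P →₀ ℕ) : 0 < Nm N m :=
  Finset.prod_pos fun p _ ↦ pow_pos (hN p) _

theorem log_Nm (hN : ∀ p, 0 < N p) (m : P →₀ ℕ) :
    Real.log (Nm N m) = ∑ p ∈ m.support, m p * Real.log (N p) := by
  rw [Nm, Finsupp.prod, Nat.cast_prod, Real.log_prod fun p _ ↦ by have := hN p; positivity]
  simp only [Nat.cast_pow, Real.log_pow]

variable (N) in
/-- The real-valued height on the free abelian monoid given by the norm. -/
abbrev normHeight (m : P →₀ ℕ) : ℝ := Nm N m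

variable (P) in
/-- The Möbius function of the free abelian monoid. Arithmetic functions on the monoid are encoded
as power series, whose product is Dirichlet convolution. -/
def moebiusSeries : MvPowerSeries P ℝ := fun m ↦
  if ∀ p, m p ≤ 1 then (-1) ^ m.support.card else 0

variable (P) in
/-- The constant arithmetic function `1`. -/
def zetaSeries : MvPowerSeries P ℝ := fun _ ↦ 1

variable (N) in
/-- The arithmetic function `m ↦ log (Nm N m)`. -/
def logSeries : MvPowerSeries P ℝ := fun m ↦ Real.log (Nm N m)

variable (N) in
/-- The von Mangoldt function, supported on the powers of a single prime element. -/
def vonMangoldtSeries : MvPowerSeries P ℝ := fun m ↦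
  if m.support.card = 1 then ∑ p ∈ m.support, Real.log (N p) else 0

theorem abs_moebiusSeries_le_one (m : P →₀ ℕ) : |moebiusSeries P m| ≤ 1 := by
  unfold moebiusSeries
  split_ifs <;> simp

theorem sum_powerset_neg_one_pow_card_real (s : Finset P) :
    ∑ t ∈ s.powerset, (-1 : ℝ) ^ t.card = if s = ∅ then 1 else 0 := by
  exact_mod_cast congrArg (Int.cast : ℤ → ℝ) (Finset.sum_powerset_neg_one_pow_card (x := s))

/-- The product of the prime elements in `s`. -/
def primeProduct (s : Finset P) : P →₀ ℕ := Finsupp.indicator s fun _ _ ↦ 1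

theorem primeProduct_apply (s : Finset P) (p : P) :
    primeProduct s p = if p ∈ s then 1 else 0 := by
  simp [primeProduct, Finsupp.indicator_apply]

theorem support_primeProduct (s : Finset P) : (primeProduct s).support = s := by
  ext p
  simp [primeProduct_apply]

theorem primeProduct_le {s : Finset P} {m : P →₀ ℕ} (hs : s ⊆ m.support) :
    primeProduct s ≤ m := by
  intro p
  rw [primeProduct_apply]
  split_ifs with hp
  · exact Nat.one_le_iff_ne_zero.2 (Finsupp.mem_support_iff.1 (hs hp))
  · exact Nat.zero_le _

theorem primeProduct_support {m : P →₀ ℕ} (hm : ∀ p, m p ≤ 1) : primeProduct m.support = m := by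
  ext p
  have hp := hm p
  simp only [primeProduct_apply, Finsupp.mem_support_iff]
  split_ifs <;> omega

theorem moebiusSeries_primeProduct (s : Finset P) :
    moebiusSeries P (primeProduct s) = (-1) ^ s.card := by
  have hle (p : P) : primeProduct s p ≤ 1 := by
    rw [primeProduct_apply]
    split_ifs <;> simp
  rw [moebiusSeries, if_pos hle, support_primeProduct]

theorem moebiusSeries_mul_zetaSeries : moebiusSeries P * zetaSeries P = 1 := by
  ext m
  rw [MvPowerSeries.coeff_mul, MvPowerSeries.coeff_one,
    ← Finset.sum_of_injOn (s := m.support.powerset) (f := fun s ↦ (-1) ^ s.card)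
      (fun s ↦ (primeProduct s, m - primeProduct s))]
  · simp only [sum_powerset_neg_one_pow_card_real, Finsupp.support_eq_empty]
  · intro s _ t _ hst
    simpa only [Function.comp_apply, support_primeProduct] using
      congrArg (Finsupp.support ∘ Prod.fst) hst
  · exact fun s hs ↦ Finset.mem_coe.2 <| mem_antidiagonal.2 <|
      add_tsub_cancel_of_le (primeProduct_le (Finset.mem_powerset.1 hs))
  · rintro ⟨s, n⟩ hsn hnot
    obtain rfl := mem_antidiagonal.1 hsn
    suffices ¬ ∀ p, s p ≤ 1 from mul_eq_zero_of_left (if_neg this) _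
    refine fun hs ↦ hnot ⟨s.support, ?_, ?_⟩
    · exact Finset.mem_coe.2 <| Finset.mem_powerset.2 <| Finsupp.support_mono le_self_add
    · simp only [primeProduct_support hs, add_tsub_cancel_left]
  · exact fun s _ ↦ ((mul_one _).trans (moebiusSeries_primeProduct s)).symm

theorem vonMangoldtSeries_single (p : P) {j : ℕ} (hj : j ≠ 0) :
    vonMangoldtSeries N (Finsupp.single p j) = Real.log (N p) := by
  simp [vonMangoldtSeries, Finsupp.support_single, hj]

theorem vonMangoldtSeries_eq_zero {m : P →₀ ℕ} (hm : ∀ p j, j ≠ 0 → Finsupp.single p j ≠ m) :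
    vonMangoldtSeries N m = 0 := by
  refine if_neg fun hcard ↦ ?_
  obtain ⟨p, hp, hmp⟩ := Finsupp.card_support_eq_one.1 hcard
  exact hm p (m p) hp hmp.symm

theorem vonMangoldtSeries_mul_zetaSeries (hN : ∀ p, 0 < N p) :
    vonMangoldtSeries N * zetaSeries P = logSeries N := by
  ext m
  change _ = Real.log (Nm N m)
  rw [MvPowerSeries.coeff_mul, log_Nm hN,
    ← Finset.sum_of_injOn (s := m.support.sigma fun p ↦ Finset.Icc 1 (m p))
      (f := fun pj ↦ Real.log (N pj.1))
      (fun pj ↦ (Finsupp.single pj.1 pj.2, m - Finsupp.single pj.1 pj.2))]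
  · simp [Finset.sum_sigma]
  · rintro ⟨p, j⟩ hpj ⟨q, k⟩ - heq
    have hj : j ≠ 0 := by
      simp only [Finset.coe_sigma, Set.mem_sigma_iff, Finset.coe_Icc, Set.mem_Icc] at hpj
      omega
    rcases Finsupp.single_eq_single_iff .. |>.1 (Prod.ext_iff.1 heq).1 with ⟨rfl, rfl⟩ | ⟨h0, -⟩
    · rfl
    · exact absurd h0 hj
  · rintro ⟨p, j⟩ hpj
    simp only [Finset.coe_sigma, Set.mem_sigma_iff, Finset.coe_Icc, Set.mem_Icc] at hpj
    exact Finset.mem_coe.2 <| mem_antidiagonal.2 <|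
      add_tsub_cancel_of_le (Finsupp.single_le_iff.2 hpj.2.2)
  · rintro ⟨s, n⟩ hsn hnot
    obtain rfl := mem_antidiagonal.1 hsn
    refine mul_eq_zero_of_left (vonMangoldtSeries_eq_zero fun p j hj hs ↦ hnot ⟨⟨p, j⟩, ?_, ?_⟩) _
    · subst hs
      simp [hj, Nat.one_le_iff_ne_zero]
    · simp [hs]
  · rintro ⟨p, j⟩ hpj
    have hj : j ≠ 0 := by
      simp only [Finset.mem_sigma, Finset.mem_Icc] at hpj
      omega
    exact ((mul_one _).trans (vonMangoldtSeries_single p hj)).symm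

theorem moebiusSeries_mul_logSeries (hN : ∀ p, 0 < N p) :
    moebiusSeries P * logSeries N = vonMangoldtSeries N := by
  rw [← vonMangoldtSeries_mul_zetaSeries hN, mul_left_comm, moebiusSeries_mul_zetaSeries, mul_one]

theorem sum_sublevel_sum_antidiagonal (hN : ∀ p, 0 < N p) [Northcott (normHeight N)]
    (F : (P →₀ ℕ) → (P →₀ ℕ) → ℝ) (x : ℝ) :
    ∑ k ∈ sublevel (normHeight N) x, ∑ sn ∈ antidiagonal k, F sn.1 sn.2 =
      ∑ s ∈ sublevel (normHeight N) x,
        ∑ n ∈ sublevel (normHeight N) (x / normHeight N s), F s n := by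
  have hmul (s n : P →₀ ℕ) : n ∈ sublevel (normHeight N) (x / normHeight N s) ↔
      normHeight N (s + n) ≤ x := by
    have hs : (0 : ℝ) < Nm N s := mod_cast Nm_pos hN s
    rw [mem_sublevel, le_div_iff₀' hs, ← Nat.cast_mul, ← Nm_add]
  have hle (s n : P →₀ ℕ) : normHeight N s ≤ normHeight N (s + n) := by
    simp only [normHeight, Nm_add, Nat.cast_le]
    exact Nat.le_mul_of_pos_right _ (Nm_pos hN n)
  rw [Finset.sum_sigma', Finset.sum_sigma']
  refine Finset.sum_nbij' (fun k ↦ ⟨k.2.1, k.2.2⟩) (fun s ↦ ⟨s.1 + s.2, s.1, s.2⟩) ?_ ?_ ?_ ?_ ?_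
  · rintro ⟨k, s, n⟩ hk
    simp only [Finset.mem_sigma, mem_sublevel, mem_antidiagonal] at hk
    obtain ⟨hk, rfl⟩ := hk
    exact Finset.mem_sigma.2 ⟨mem_sublevel.2 ((hle s n).trans hk), (hmul s n).2 hk⟩
  · rintro ⟨s, n⟩ hsn
    exact Finset.mem_sigma.2 ⟨mem_sublevel.2 ((hmul s n).1 (Finset.mem_sigma.1 hsn).2),
      mem_antidiagonal.2 rfl⟩
  · rintro ⟨k, s, n⟩ hk
    simp only [Finset.mem_sigma, mem_antidiagonal] at hk
    obtain ⟨-, rfl⟩ := hk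
    rfl
  · exact fun _ _ ↦ rfl
  · exact fun _ _ ↦ rfl

theorem sum_antidiagonal_moebiusSeries (m : P →₀ ℕ) :
    ∑ sn ∈ antidiagonal m, moebiusSeries P sn.1 = if m = 0 then 1 else 0 := by
  have hcoeff := congrArg (MvPowerSeries.coeff m) (moebiusSeries_mul_zetaSeries (P := P))
  rw [MvPowerSeries.coeff_mul, MvPowerSeries.coeff_one] at hcoeff
  rw [← hcoeff]
  exact Finset.sum_congr rfl fun sn _ ↦ (mul_one _).symm

theorem sum_antidiagonal_moebiusSeries_mul_log (hN : ∀ p, 0 < N p) (m : P →₀ ℕ) :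
    ∑ sn ∈ antidiagonal m, moebiusSeries P sn.1 * Real.log (Nm N sn.2) =
      vonMangoldtSeries N m := by
  have hcoeff := congrArg (MvPowerSeries.coeff m) (moebiusSeries_mul_logSeries hN)
  rwa [MvPowerSeries.coeff_mul] at hcoeff

/-- Möbius inversion applied to the combination of `HasLinearCount.exists_abs_sum_log_div_sub_le`,
whose main terms cancel. -/
theorem sum_moebiusSeries_mul_sum_eq (hN : ∀ p, 0 < N p) [Northcott (normHeight N)] (a b : ℝ)
    {x : ℝ} (hx : 1 ≤ x) :
    ∑ s ∈ sublevel (normHeight N) x, moebiusSeries P s / Nm N s *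
        ∑ n ∈ sublevel (normHeight N) (x / Nm N s), (Real.log (Nm N n) / Nm N n -
          ((Real.log (x / Nm N s) - Real.log (Nm N n) + a) / Nm N n + b / (x / Nm N s))) =
      ∑ m ∈ sublevel (normHeight N) x, vonMangoldtSeries N m / Nm N m
        - (Real.log x + a + b / x) := by
  have hpos (m : P →₀ ℕ) : (0 : ℝ) < Nm N m := mod_cast Nm_pos hN m
  have hterm (s n : P →₀ ℕ) : moebiusSeries P s / Nm N s * (Real.log (Nm N n) / Nm N n -
        ((Real.log (x / Nm N s) - Real.log (Nm N n) + a) / Nm N n + b / (x / Nm N s))) =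
      moebiusSeries P s * Real.log (Nm N n) / Nm N (s + n) - moebiusSeries P s *
        ((Real.log x - Real.log (Nm N (s + n)) + a) / Nm N (s + n) + b / x) := by
    have := (hpos s).ne'
    have := (hpos n).ne'
    rw [Nm_add, Nat.cast_mul, Real.log_mul (by assumption) (by assumption),
      Real.log_div (by positivity) (by assumption)]
    field_simp
    ring
  have hinner (m : P →₀ ℕ) : ∑ sn ∈ antidiagonal m, (moebiusSeries P sn.1 *
        Real.log (Nm N sn.2) / Nm N (sn.1 + sn.2) - moebiusSeries P sn.1 *
        ((Real.log x - Real.log (Nm N (sn.1 + sn.2)) + a) / Nm N (sn.1 + sn.2) + b / x)) =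
      vonMangoldtSeries N m / Nm N m - if m = 0 then Real.log x + a + b / x else 0 := by
    rw [Finset.sum_congr rfl fun sn hsn ↦ by rw [mem_antidiagonal.1 hsn],
      Finset.sum_sub_distrib, ← Finset.sum_div, ← Finset.sum_mul,
      sum_antidiagonal_moebiusSeries_mul_log hN, sum_antidiagonal_moebiusSeries]
    split_ifs with hm <;> simp [hm, Nm_zero]
  simp only [Finset.mul_sum, hterm]
  rw [← sum_sublevel_sum_antidiagonal hN (fun s n ↦ moebiusSeries P s * Real.log (Nm N n) /
    Nm N (s + n) - moebiusSeries P s *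
      ((Real.log x - Real.log (Nm N (s + n)) + a) / Nm N (s + n) + b / x))]
  simp only [hinner, Finset.sum_sub_distrib, Finset.sum_ite_eq']
  rw [if_pos (by simpa [normHeight, Nm_zero] using hx)]

theorem exists_abs_sum_vonMangoldtSeries_div_sub_log_le (hN : ∀ p, 0 < N p)
    [Northcott (normHeight N)] {κ η : ℝ} (hκ : κ ≠ 0) (hη : 0 < η)
    (hcount : HasLinearCount (normHeight N) κ η) :
    ∃ C, ∀ x ≥ 1,
      |∑ m ∈ sublevel (normHeight N) x, vonMangoldtSeries N m / Nm N m - Real.log x| ≤ C := by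
  have hpos (m : P →₀ ℕ) : 0 < normHeight N m := mod_cast Nm_pos hN m
  obtain ⟨a, b, C, hC⟩ := hcount.exists_abs_sum_log_div_sub_le hκ hη
  obtain ⟨D, hD⟩ := hcount.exists_abs_sum_div_mul_le hη (half_pos hη) (half_le_self hη.le) hpos hC
  refine ⟨D + |a| + |b|, fun x hx ↦ ?_⟩
  have hbound := hD _ abs_moebiusSeries_le_one x hx
  rw [sum_moebiusSeries_mul_sum_eq hN a b hx] at hbound
  have hbx : |b / x| ≤ |b| := by
    rw [abs_div, abs_of_pos (zero_lt_one.trans_le hx)]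
    exact div_le_self (abs_nonneg b) hx
  rw [abs_le] at *
  constructor <;> linarith [neg_abs_le a, le_abs_self a]

variable (N) in
/-- The logarithmic height of prime elements, the scale on which Mertens' estimates read
`∑ h / N = u + O(1)` and `∑ 1 / N = log u + A + O(1 / u)`. -/
def logHeight (p : P) : ℝ := Real.log (N p)

theorem logHeight_le_iff (hN : ∀ p, 0 < N p) {p : P} {u : ℝ} :
    logHeight N p ≤ u ↔ normHeight N (Finsupp.single p 1) ≤ Real.exp u := by
  rw [normHeight, Nm_single, pow_one, logHeight, Real.log_le_iff_le_exp (mod_cast hN p)]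

theorem northcott_logHeight (hN : ∀ p, 0 < N p) [Northcott (normHeight N)] :
    Northcott (logHeight N) where
  finite_le u := by
    simp only [logHeight_le_iff hN]
    exact (Northcott.finite_le (h := normHeight N) (Real.exp u)).preimage
      (Finsupp.single_left_injective one_ne_zero).injOn

theorem single_add_two_injective :
    Function.Injective fun pj : P × ℕ ↦ Finsupp.single pj.1 (pj.2 + 2) := by
  rintro ⟨p, j⟩ ⟨q, k⟩ heq
  rcases (Finsupp.single_eq_single_iff ..).1 heq with ⟨rfl, hjk⟩ | ⟨hj, -⟩
  · simpa using hjk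
  · omega

theorem sum_vonMangoldtSeries_div_eq (hN : ∀ p, 0 < N p) [Northcott (normHeight N)]
    [Northcott (logHeight N)] (u : ℝ) :
    ∑ m ∈ sublevel (normHeight N) (Real.exp u), vonMangoldtSeries N m / Nm N m =
      ∑ p ∈ sublevel (logHeight N) u, (N p : ℝ)⁻¹ * logHeight N p +
        ∑ pj ∈ (sublevel (normHeight N) (Real.exp u) \
            (sublevel (logHeight N) u).image (Finsupp.single · 1)).preimage _
              single_add_two_injective.injOn,
          logHeight N pj.1 / (N pj.1 : ℝ) ^ (pj.2 + 2) := by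
  have hsub : (sublevel (logHeight N) u).image (Finsupp.single · 1) ⊆
      sublevel (normHeight N) (Real.exp u) := by
    simp only [Finset.image_subset_iff, mem_sublevel, logHeight_le_iff hN]
    exact fun _ ↦ id
  have hvalue (p : P) (j : ℕ) (hj : j ≠ 0) : vonMangoldtSeries N (Finsupp.single p j) /
      Nm N (Finsupp.single p j) = logHeight N p / (N p : ℝ) ^ j := by
    rw [vonMangoldtSeries_single p hj, Nm_single, Nat.cast_pow, logHeight]
  rw [← Finset.sum_sdiff hsub, add_comm,
    Finset.sum_image (Finsupp.single_left_injective one_ne_zero).injOn]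
  congr 1
  · refine Finset.sum_congr rfl fun p _ ↦ ?_
    rw [hvalue p 1 one_ne_zero, pow_one, div_eq_inv_mul]
  · rw [← Finset.sum_preimage _ _ single_add_two_injective.injOn]
    · exact Finset.sum_congr rfl fun pj _ ↦ hvalue pj.1 _ (by omega)
    · intro m hm hrange
      rw [Finset.mem_sdiff, mem_sublevel] at hm
      rw [vonMangoldtSeries_eq_zero fun p j hj heq ↦ ?_, zero_div]
      obtain rfl | hj2 : j = 1 ∨ 2 ≤ j := by omega
      · exact hm.2 (Finset.mem_image.2
          ⟨p, mem_sublevel.2 ((logHeight_le_iff hN).2 (heq ▸ hm.1)), heq⟩)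
      · exact hrange ⟨(p, j - 2), by simpa [Nat.sub_add_cancel hj2] using heq⟩

theorem logHeight_div_sq_mul_le {p : P} (hp : 2 ≤ N p) :
    logHeight N p / (N p : ℝ) ^ 2 * (1 - (N p : ℝ)⁻¹)⁻¹ ≤ 4 * (N p : ℝ) ^ (-(1 / 2) - 1 : ℝ) := by
  have hp2 : (2 : ℝ) ≤ N p := mod_cast hp
  have hp0 : (0 : ℝ) < N p := by linarith
  have hlog : logHeight N p ≤ 2 * (N p : ℝ) ^ (1 / 2 : ℝ) := by
    refine (Real.log_le_rpow_div hp0.le (half_pos one_pos)).trans_eq ?_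
    ring
  have hsub : 0 < 1 - (N p : ℝ)⁻¹ := sub_pos.2 (inv_lt_one_of_one_lt₀ (by linarith))
  have hfactor : (1 - (N p : ℝ)⁻¹)⁻¹ ≤ 2 := by
    rw [inv_le_comm₀ hsub two_pos]
    linarith [inv_anti₀ two_pos hp2]
  calc logHeight N p / (N p : ℝ) ^ 2 * (1 - (N p : ℝ)⁻¹)⁻¹
      ≤ 2 * (N p : ℝ) ^ (1 / 2 : ℝ) / (N p : ℝ) ^ 2 * 2 := by gcongr
    _ = 4 * ((N p : ℝ) ^ (1 / 2 : ℝ) / (N p : ℝ) ^ (2 : ℝ)) := by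
      rw [Real.rpow_two]
      ring
    _ = 4 * (N p : ℝ) ^ (-(1 / 2) - 1 : ℝ) := by
      rw [← Real.rpow_sub hp0]
      norm_num

theorem summable_logHeight_div_pow (hN : ∀ p, 2 ≤ N p) [Northcott (normHeight N)] {κ η : ℝ}
    (hη : 0 < η) (hcount : HasLinearCount (normHeight N) κ η) :
    Summable fun pj : P × ℕ ↦ logHeight N pj.1 / (N pj.1 : ℝ) ^ (pj.2 + 2) := by
  have hN2 (p : P) : (2 : ℝ) ≤ N p := mod_cast hN p
  have hlog (p : P) : 0 ≤ logHeight N p := Real.log_nonneg (by linarith [hN2 p])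
  have hgeom (p : P) : HasSum (fun j : ℕ ↦ logHeight N p / (N p : ℝ) ^ (j + 2))
      (logHeight N p / (N p : ℝ) ^ 2 * (1 - (N p : ℝ)⁻¹)⁻¹) := by
    have hp := hN2 p
    convert! (hasSum_geometric_of_lt_one (by positivity)
      (inv_lt_one_of_one_lt₀ (by linarith : (1 : ℝ) < N p))).mul_left
        (logHeight N p / (N p : ℝ) ^ 2) using 2 with j
    rw [pow_add, inv_pow]
    field_simp
  have hprimes : Summable fun p ↦ (N p : ℝ) ^ (-(1 / 2) - 1 : ℝ) := by
    simpa [Function.comp_def, normHeight, Nm_single] using (hcount.summable_rpow_sub_one hη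
      (r := -(1 / 2)) (by norm_num) fun _ ↦ Nat.cast_nonneg _).comp_injective
        (Finsupp.single_left_injective (α := P) one_ne_zero)
  refine (summable_prod_of_nonneg fun pj ↦ ?_).2 ⟨fun p ↦ (hgeom p).summable, ?_⟩
  · exact div_nonneg (hlog _) (by positivity)
  simp only [(hgeom _).tsum_eq]
  refine Summable.of_nonneg_of_le (fun p ↦ ?_) (fun p ↦ ?_) (hprimes.mul_left 4)
  · have hinv : (N p : ℝ)⁻¹ ≤ 1 := inv_le_one_of_one_le₀ (by linarith [hN2 p])
    exact mul_nonneg (div_nonneg (hlog p) (by positivity)) (inv_nonneg.2 (sub_nonneg.2 hinv))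
  · exact logHeight_div_sq_mul_le (hN p)

theorem exists_abs_sum_logHeight_div_sub_le (hN : ∀ p, 2 ≤ N p) [Northcott (normHeight N)]
    [Northcott (logHeight N)] {κ η : ℝ} (hκ : κ ≠ 0) (hη : 0 < η)
    (hcount : HasLinearCount (normHeight N) κ η) :
    ∃ C, ∀ u ≥ 0, |∑ p ∈ sublevel (logHeight N) u, (N p : ℝ)⁻¹ * logHeight N p - u| ≤ C := by
  have hN0 (p : P) : 0 < N p := two_pos.trans_le (hN p)
  have hsummable := summable_logHeight_div_pow hN hη hcount
  have hnonneg (pj : P × ℕ) : 0 ≤ logHeight N pj.1 / (N pj.1 : ℝ) ^ (pj.2 + 2) :=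
    div_nonneg (Real.log_nonneg (mod_cast hN0 pj.1)) (by positivity)
  obtain ⟨C, hC⟩ := exists_abs_sum_vonMangoldtSeries_div_sub_log_le hN0 hκ hη hcount
  refine ⟨C + ∑' pj : P × ℕ, logHeight N pj.1 / (N pj.1 : ℝ) ^ (pj.2 + 2), fun u hu ↦ ?_⟩
  have hmangoldt := hC (Real.exp u) (Real.one_le_exp hu)
  rw [Real.log_exp, sum_vonMangoldtSeries_div_eq hN0] at hmangoldt
  set powers := (sublevel (normHeight N) (Real.exp u) \
    (sublevel (logHeight N) u).image (Finsupp.single · 1)).preimage _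
      single_add_two_injective.injOn
  have hpow_nonneg := Finset.sum_nonneg fun pj (_ : pj ∈ powers) ↦ hnonneg pj
  have hpow_le := hsummable.sum_le_tsum powers fun pj _ ↦ hnonneg pj
  rw [abs_le] at *
  constructor <;> linarith

theorem StarCond.northcott {κ θ : ℝ} (hstar : StarCond N κ θ) : Northcott (normHeight N) where
  finite_le x := by
    obtain ⟨hκ, -, hθ, hcount⟩ := hstar
    have hlinear : (fun t : ℝ ↦ t ^ θ) =o[atTop] fun t ↦ κ * t := by
      refine .const_mul_right hκ.ne' (isLittleO_of_tendsto' ?_ ?_)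
      · filter_upwards [eventually_ne_atTop 0] with t ht hzero using absurd hzero ht
      · refine (tendsto_rpow_neg_atTop (sub_pos.2 hθ)).congr' ?_
        filter_upwards [eventually_gt_atTop 0] with t ht
        rw [neg_sub, Real.rpow_sub_one ht.ne']
    obtain ⟨t, hbound, hxt, ht0⟩ := (((hcount.trans_isLittleO hlinear).def one_half_pos).and
      ((eventually_ge_atTop x).and (eventually_gt_atTop 0))).exists
    refine Set.Finite.subset (s := {m | (Nm N m : ℝ) ≤ t})
      (Set.finite_of_ncard_ne_zero fun hzero ↦ ?_) fun m hm ↦ le_trans hm hxt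
    have hpos : 0 < κ * t := mul_pos hκ ht0
    rw [hzero, Nat.cast_zero, zero_sub, norm_neg, Real.norm_of_nonneg hpos.le] at hbound
    linarith

theorem StarCond.hasLinearCount {κ θ : ℝ} (hstar : StarCond N κ θ) [Northcott (normHeight N)] :
    HasLinearCount (normHeight N) κ ((1 - θ) / 2) := by
  obtain ⟨hκ, hθ, -, hcount⟩ := hstar
  obtain ⟨C, hC⟩ := hcount.bound
  obtain ⟨x₀, hx₀⟩ := eventually_atTop.1 hC
  have hcard (t : ℝ) : {m : P →₀ ℕ | (Nm N m : ℝ) ≤ t}.ncard = (sublevel (normHeight N) t).card :=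
    Set.ncard_eq_toFinset_card _ _
  set B : ℝ := (sublevel (normHeight N) x₀).card + κ * x₀
  refine ⟨max C B, fun t ht ↦ ?_⟩
  have ht0 : 0 < t := by linarith
  rw [show 1 - 2 * ((1 - θ) / 2) = θ by ring]
  rcases le_total x₀ t with hle | hle
  · have hbound := hx₀ t hle
    rw [hcard, Real.norm_eq_abs, Real.norm_of_nonneg (Real.rpow_nonneg ht0.le θ)] at hbound
    exact hbound.trans (by gcongr; exact le_max_left C B)
  · have hcard_le : ((sublevel (normHeight N) t).card : ℝ) ≤ (sublevel (normHeight N) x₀).card :=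
      mod_cast Finset.card_le_card (sublevel_mono hle)
    have hκt : κ * t ≤ κ * x₀ := by gcongr
    have hκt0 : 0 < κ * t := by positivity
    calc |((sublevel (normHeight N) t).card : ℝ) - κ * t| ≤ B := by
          rw [abs_le]
          constructor <;> linarith [(sublevel (normHeight N) t).card.cast_nonneg (α := ℝ)]
      _ ≤ max C B := le_max_right C B
      _ ≤ max C B * t ^ θ := le_mul_of_one_le_right
          ((by linarith [Nat.cast_nonneg (α := ℝ) (sublevel (normHeight N) x₀).card] :
            0 ≤ B).trans (le_max_right C B)) (Real.one_le_rpow ht hθ)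

theorem half_lt_logHeight (hN : ∀ p, 2 ≤ N p) (p : P) : 1 / 2 < logHeight N p := by
  have hlog : Real.log 2 ≤ logHeight N p := Real.log_le_log two_pos (mod_cast hN p)
  linarith [Real.log_two_gt_d9]

theorem StarCond.exists_hasLogSum {κ θ : ℝ} (hstar : StarCond N κ θ) (hN : ∀ p, 2 ≤ N p)
    [Northcott (logHeight N)] :
    ∃ A C, HasLogSum (logHeight N) (fun p ↦ (N p : ℝ)⁻¹) (1 / 2) A C := by
  have : Northcott (normHeight N) := hstar.northcott
  obtain ⟨C, hC⟩ := exists_abs_sum_logHeight_div_sub_le hN hstar.1.ne'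
    (half_pos (sub_pos.2 hstar.2.2.1)) hstar.hasLinearCount
  obtain ⟨A, hA⟩ := exists_hasLogSum_of_abs_sum_mul_sub_le one_half_pos
    (fun p ↦ (one_half_pos.trans (half_lt_logHeight hN p)).ne')
    fun u hu ↦ hC u (one_half_pos.le.trans hu)
  exact ⟨A, _, hA⟩

theorem logHeight_le_log_iff (hN : ∀ p, 0 < N p) {p : P} {x : ℝ} (hx : 0 < x) :
    logHeight N p ≤ Real.log x ↔ (N p : ℝ) ≤ x :=
  Real.log_le_log_iff (mod_cast hN p) hx

theorem finsum_one_div_eq (hN : ∀ p, 0 < N p) [Northcott (logHeight N)] {x : ℝ} (hx : 0 < x) :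
    ∑ᶠ p ∈ {p : P | (N p : ℝ) ≤ x}, 1 / (N p : ℝ) =
      ∑ p ∈ sublevel (logHeight N) (Real.log x), (N p : ℝ)⁻¹ := by
  have hset : {p : P | (N p : ℝ) ≤ x} = sublevel (logHeight N) (Real.log x) := by
    ext p
    simp [logHeight_le_log_iff hN hx]
  simp only [hset, finsum_mem_coe_finset, one_div]

theorem finsum_pairs_one_div_eq (hN : ∀ p, 0 < N p) [Northcott (logHeight N)] {x : ℝ}
    (hx : 0 < x) :
    ∑ᶠ pq ∈ {pq : P × P | (N pq.1 : ℝ) * (N pq.2 : ℝ) ≤ x}, 1 / ((N pq.1 : ℝ) * (N pq.2 : ℝ)) =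
      ∑ p ∈ sublevel (logHeight N) (Real.log x),
        ∑ q ∈ sublevel (logHeight N) (Real.log x - logHeight N p), (N p : ℝ)⁻¹ * (N q : ℝ)⁻¹ := by
  have hle (p q : P) : (N p : ℝ) * N q ≤ x ↔
      logHeight N p ≤ Real.log x ∧ logHeight N q ≤ Real.log x - logHeight N p := by
    have hp : (0 : ℝ) < N p := mod_cast hN p
    have hq : (0 : ℝ) < N q := mod_cast hN q
    have hq0 : 0 ≤ logHeight N q := Real.log_natCast_nonneg _
    rw [← Real.log_le_log_iff (mul_pos hp hq) hx, Real.log_mul hp.ne' hq.ne',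
      ← logHeight, ← logHeight]
    exact ⟨fun hpq ↦ ⟨by linarith, by linarith⟩, fun hpq ↦ by linarith [hpq.2]⟩
  rw [Finset.sum_sigma', ← finsum_mem_coe_finset]
  refine finsum_mem_eq_of_bijOn (fun pq ↦ ⟨pq.1, pq.2⟩) ⟨?_, ?_, ?_⟩ fun pq _ ↦ ?_
  · exact fun pq hpq ↦ by simpa using (hle _ _).1 hpq
  · exact fun pq _ rs _ heq ↦ by simpa [Prod.ext_iff] using heq
  · exact fun pq hpq ↦ ⟨(pq.1, pq.2), (hle _ _).2 (by simpa using hpq), rfl⟩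
  · rw [one_div, mul_inv]

theorem IsMertens.eq_of_hasLogSum {A A' δ C : ℝ} (hA : IsMertens N A) (hN : ∀ p, 0 < N p)
    [Northcott (logHeight N)] (hlog : HasLogSum (logHeight N) (fun p ↦ (N p : ℝ)⁻¹) δ A' C) :
    A' = A := by
  refine tendsto_nhds_unique ((hlog.tendsto.comp Real.tendsto_log_atTop).congr'
    ((eventually_gt_atTop 0).mono fun x hx ↦ ?_)) hA
  rw [finsum_one_div_eq hN hx, Function.comp_apply]

end FreeMonoid

/-- Mertens-type estimate for sums over pairs of prime elements. -/
theorem sum_pairs_primes {P : Type*} [Countable P] (N : P → ℕ)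
    (hN : ∀ p, 2 ≤ N p) (κ θ : ℝ) (hstar : StarCond N κ θ)
    (A : ℝ) (hA : IsMertens N A) :
    (fun x : ℝ =>
        (∑ᶠ pq ∈ {pq : P × P | (N pq.1 : ℝ) * (N pq.2 : ℝ) ≤ x},
            1 / ((N pq.1 : ℝ) * (N pq.2 : ℝ)))
          - Real.log (Real.log x) ^ 2 - 2 * A * Real.log (Real.log x)
          - A ^ 2 - Bconst)
      =O[atTop] fun x : ℝ => Real.log (Real.log x) / Real.log x := by
  have hN0 (p : P) : 0 < N p := two_pos.trans_le (hN p)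
  have : Northcott (normHeight N) := hstar.northcott
  have : Northcott (logHeight N) := northcott_logHeight hN0
  obtain ⟨A', C, hlog⟩ := hstar.exists_hasLogSum hN
  obtain rfl : A' = A := hA.eq_of_hasLogSum hN0 hlog
  have hpairs := hlog.isBigO_sum_sum_sub_sq_add (fun p ↦ by positivity) one_half_pos
    (half_lt_logHeight hN)
  refine (hpairs.comp_tendsto Real.tendsto_log_atTop).congr'
    ((eventually_gt_atTop 0).mono fun x hx ↦ ?_) .rfl
  simp only [Function.comp_apply, finsum_pairs_one_div_eq hN0 hx, Bconst]
  ring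
end
end

section
/- Under Condition (★), for every integer h ≥ 2, the counting function T_h(x) := #{(a₀, a₁, …, a_{h−1}) ∈ M^h : N(a₀)^h · N(a₁)^{h+1} ⋯ N(a_{h−1})^{2h−1} ≤ x} satisfies T_h(x) = κ·(∏_{i=1}^{h−1} ζ_M(1 + i/h))·x^{1/h} + O_h(R_{T_h}(x)) as x → ∞, where R_{T_h}(x) := x^{θ/h} if h/(h+1) < θ; R_{T_h}(x) := x^{1/(h+1)}·log x if θ = h/(h+i) for some i ∈ {1,…,h−1}; and R_{T_h}(x) := x^{1/(h+1)} if h/(h+1) > θ and θ ≠ h/(h+i) for all i ∈ {1,…,h−1}; the implied constant depends only on h and the data P, N, κ, θ. -/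
open Filter Topology Asymptotics
open scoped Classical

noncomputable section

/-!
A tuple `(a₀, b)` is fibred over its tail `b = (a₁, …, a_{h-1})`, whose weight is
`g b = n(a₁) ^ (h + 1) ⋯ n(a_{h-1}) ^ (2h - 1)`. The number of tuples of weight at most `x` is the
sum, over the `b` with `g b ≤ x`, of the number of `a₀` with `n(a₀) ^ h ≤ x / g b`, which is
`κ (x / g b) ^ (1 / h) + O((x / g b) ^ (θ / h))`. By the same fibration and induction on the length,
the tails are counted by `O(x ^ (1 / (h + 1)))`. Partial summation against this bound shows that
extending the main terms to the full series `∑ b, g b ^ (-1 / h)`, a product of zeta values, costs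
`O(x ^ (1 / (h + 1)))`, and that `∑ b, g b ^ (-θ / h)` over `g b ≤ x` is `O(1)`, `O(log x)` or
`O(x ^ (1 / (h + 1) - θ / h))` according to the sign of `θ / h - 1 / (h + 1)`.
-/

section PartialSummation

variable {α : Type*} {f : α → ℝ} {C β σ x y : ℝ}

lemma rpow_neg_eq_add_integral_indicator {c : ℝ} (hx : 0 < x) (hxc : x ≤ c) (hcy : c ≤ y) :
    c ^ (-σ) = y ^ (-σ) + σ * ∫ t in x..y, (Set.Ioi c).indicator (fun t => t ^ (-σ - 1)) t := by
  have restrict : ∫ t in x..y, (Set.Ioi c).indicator (fun t => t ^ (-σ - 1)) t =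
      ∫ t in c..y, t ^ (-σ - 1) := by
    rw [intervalIntegral.integral_of_le (hxc.trans hcy), intervalIntegral.integral_of_le hcy,
      MeasureTheory.setIntegral_indicator measurableSet_Ioi, Set.Ioc_inter_Ioi, max_eq_right hxc]
  rcases eq_or_ne σ 0 with rfl | hσ
  · simp
  have hzero : (0 : ℝ) ∉ Set.uIcc c y :=
    Set.notMem_uIcc_of_lt (hx.trans_le hxc) (hx.trans_le (hxc.trans hcy))
  rw [restrict, integral_rpow (Or.inr ⟨by simpa [sub_eq_iff_eq_add] using hσ, hzero⟩),
    sub_add_cancel]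
  field_simp
  ring

lemma intervalIntegrable_rpow_of_pos {r : ℝ} (hx : 0 < x) (hxy : x ≤ y) :
    IntervalIntegrable (fun t : ℝ => t ^ r) MeasureTheory.volume x y :=
  intervalIntegral.intervalIntegrable_rpow (Or.inr (Set.notMem_uIcc_of_lt hx (hx.trans_le hxy)))

lemma sum_rpow_neg_eq_add_integral {F : Finset α} (hx : 0 < x) (hxy : x ≤ y)
    (hF : ∀ a ∈ F, x ≤ f a ∧ f a ≤ y) :
    ∑ a ∈ F, f a ^ (-σ) =
      F.card * y ^ (-σ) + σ * ∫ t in x..y, (F.filter (f · < t)).card * t ^ (-σ - 1) := by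
  have swap : ∫ t in x..y, ((F.filter (f · < t)).card : ℝ) * t ^ (-σ - 1) =
      ∑ a ∈ F, ∫ t in x..y, (Set.Ioi (f a)).indicator (fun t => t ^ (-σ - 1)) t := by
    rw [← intervalIntegral.integral_finsetSum]
    · simp only [Set.indicator_apply, Set.mem_Ioi, ← Finset.sum_filter, Finset.sum_const,
        nsmul_eq_mul]
    · intro a _
      have := intervalIntegrable_rpow_of_pos (r := -σ - 1) hx hxy
      exact ⟨this.1.indicator measurableSet_Ioi, this.2.indicator measurableSet_Ioi⟩
  rw [swap, Finset.mul_sum, ← nsmul_eq_mul, ← Finset.sum_const, ← Finset.sum_add_distrib]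
  exact Finset.sum_congr rfl fun a ha =>
    rpow_neg_eq_add_integral_indicator hx (hF a ha).1 (hF a ha).2

lemma intervalIntegrable_card_filter_lt_mul_rpow {r : ℝ} (F : Finset α) (hx : 0 < x)
    (hxy : x ≤ y) :
    IntervalIntegrable (fun t => ((F.filter (f · < t)).card : ℝ) * t ^ r)
      MeasureTheory.volume x y := by
  have hmono : Monotone fun t => ((F.filter (f · < t)).card : ℝ) := fun s t hst =>
    Nat.cast_le.2 (Finset.card_le_card (Finset.monotone_filter_right F fun _ _ h => h.trans_le hst))
  refine hmono.intervalIntegrable.mul_continuousOn fun t ht => ?_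
  rw [Set.uIcc_of_le hxy] at ht
  exact (Real.continuousAt_rpow_const t r (Or.inl (hx.trans_le ht.1).ne')).continuousWithinAt

lemma sum_rpow_neg_le_add_integral {F : Finset α} (hσ : 0 ≤ σ) (hx : 0 < x) (hxy : x ≤ y)
    (hF : ∀ a ∈ F, x ≤ f a ∧ f a ≤ y)
    (hcard : ∀ t, x ≤ t → ((F.filter (f · ≤ t)).card : ℝ) ≤ C * t ^ β) :
    ∑ a ∈ F, f a ^ (-σ) ≤ C * (y ^ (β - σ) + σ * ∫ t in x..y, t ^ (β - σ - 1)) := by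
  have hboundary : F.card * y ^ (-σ) ≤ C * y ^ (β - σ) := by
    have hy : 0 < y := hx.trans_le hxy
    have hcard_y := hcard y hxy
    rw [Finset.filter_true_of_mem fun a ha => (hF a ha).2] at hcard_y
    rw [sub_eq_add_neg, Real.rpow_add hy, ← mul_assoc]
    gcongr
  have hintegrand : ∀ t ∈ Set.Icc x y, (F.filter (f · < t)).card * t ^ (-σ - 1) ≤
      C * t ^ (β - σ - 1) := fun t ht => by
    have ht0 : 0 < t := hx.trans_le ht.1
    have hle : ((F.filter (f · < t)).card : ℝ) ≤ (F.filter (f · ≤ t)).card :=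
      Nat.cast_le.2 (Finset.card_le_card (Finset.monotone_filter_right F fun _ _ h => h.le))
    rw [show β - σ - 1 = β + (-σ - 1) by ring, Real.rpow_add ht0, ← mul_assoc]
    gcongr
    exact hle.trans (hcard t ht.1)
  rw [sum_rpow_neg_eq_add_integral hx hxy hF, mul_add, mul_left_comm C σ,
    ← intervalIntegral.integral_const_mul C]
  gcongr
  exact intervalIntegral.integral_mono_on hxy
    (intervalIntegrable_card_filter_lt_mul_rpow F hx hxy)
    ((intervalIntegrable_rpow_of_pos hx hxy).const_mul C) hintegrand

lemma integral_rpow_sub_one {s : ℝ} (hs : s ≠ 0) (hx : 0 < x) (hxy : x ≤ y) :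
    ∫ t in x..y, t ^ (s - 1) = (y ^ s - x ^ s) / s := by
  rw [integral_rpow (Or.inr ⟨by simpa [sub_eq_iff_eq_add] using hs,
    Set.notMem_uIcc_of_lt hx (hx.trans_le hxy)⟩), sub_add_cancel]

lemma sum_rpow_neg_le_of_forall_le {F : Finset α} (hβ : 0 ≤ β) (hβσ : β < σ) (hx : 0 < x)
    (hF : ∀ a ∈ F, x ≤ f a)
    (hcard : ∀ t, x ≤ t → ((F.filter (f · ≤ t)).card : ℝ) ≤ C * t ^ β) :
    ∑ a ∈ F, f a ^ (-σ) ≤ C * (σ / (σ - β)) * x ^ (β - σ) := by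
  obtain ⟨y, hxy, hFy⟩ : ∃ y, x ≤ y ∧ ∀ a ∈ F, f a ≤ y :=
    have hnonneg : ∀ a ∈ F, 0 ≤ f a := fun a ha => hx.le.trans (hF a ha)
    ⟨x + ∑ a ∈ F, f a, le_add_of_nonneg_right (Finset.sum_nonneg hnonneg), fun a ha =>
      (Finset.single_le_sum hnonneg ha).trans (le_add_of_nonneg_left hx.le)⟩
  have hC : 0 ≤ C := nonneg_of_mul_nonneg_left ((Nat.cast_nonneg _).trans (hcard x le_rfl))
    (Real.rpow_pos_of_pos hx β)
  have hpos : 0 < σ - β := sub_pos.2 hβσ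
  have hy : 0 < y := hx.trans_le hxy
  rw [mul_assoc]
  refine (sum_rpow_neg_le_add_integral (hβ.trans hβσ.le) hx hxy
    (fun a ha => ⟨hF a ha, hFy a ha⟩) hcard).trans (mul_le_mul_of_nonneg_left ?_ hC)
  calc y ^ (β - σ) + σ * ∫ t in x..y, t ^ (β - σ - 1)
      = σ / (σ - β) * x ^ (β - σ) - β / (σ - β) * y ^ (β - σ) := by
        rw [integral_rpow_sub_one (by linarith) hx hxy, ← neg_sub σ β]
        field_simp
        ring
    _ ≤ σ / (σ - β) * x ^ (β - σ) := sub_le_self _ (by positivity)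

lemma sum_rpow_neg_le_of_lt {F : Finset α} (hσ : 0 ≤ σ) (hσβ : σ < β) (hy : 1 ≤ y)
    (hF : ∀ a ∈ F, 1 ≤ f a ∧ f a ≤ y)
    (hcard : ∀ t, 1 ≤ t → ((F.filter (f · ≤ t)).card : ℝ) ≤ C * t ^ β) :
    ∑ a ∈ F, f a ^ (-σ) ≤ C * (β / (β - σ)) * y ^ (β - σ) := by
  have hC : 0 ≤ C := by simpa using (Nat.cast_nonneg _).trans (hcard 1 le_rfl)
  have hpos : 0 < β - σ := sub_pos.2 hσβ
  rw [mul_assoc]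
  refine (sum_rpow_neg_le_add_integral hσ one_pos hy hF hcard).trans
    (mul_le_mul_of_nonneg_left ?_ hC)
  calc y ^ (β - σ) + σ * ∫ t in 1..y, t ^ (β - σ - 1)
      = β / (β - σ) * y ^ (β - σ) - σ / (β - σ) := by
        rw [integral_rpow_sub_one hpos.ne' one_pos hy, Real.one_rpow]
        field_simp
        ring
    _ ≤ β / (β - σ) * y ^ (β - σ) := sub_le_self _ (by positivity)

lemma sum_rpow_neg_le_log {F : Finset α} (hβ : 0 ≤ β) (hy : 1 ≤ y)
    (hF : ∀ a ∈ F, 1 ≤ f a ∧ f a ≤ y)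
    (hcard : ∀ t, 1 ≤ t → ((F.filter (f · ≤ t)).card : ℝ) ≤ C * t ^ β) :
    ∑ a ∈ F, f a ^ (-β) ≤ C * (1 + β * Real.log y) := by
  have h := sum_rpow_neg_le_add_integral hβ one_pos hy hF hcard
  simpa [Real.rpow_neg_one, integral_inv_of_pos one_pos (one_pos.trans_le hy)] using h

end PartialSummation

section Counting

/-- The counting function `x ↦ #{a | f a ≤ x}`; it is `0` where the sublevel set is infinite. -/
def countLE {α : Type*} (f : α → ℝ) (x : ℝ) : ℕ := {a | f a ≤ x}.ncard

/-- A norm in the sense of arithmetic semigroups: every value is at least `1` and only finitely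
many elements have norm below any given bound. No multiplicative structure is required. -/
structure IsArithmeticNorm {α : Type*} (f : α → ℝ) : Prop where
  one_le : ∀ a, 1 ≤ f a
  finite_le : ∀ x, {a | f a ≤ x}.Finite

lemma countLE_comp_equiv {α γ : Type*} (f : α → ℝ) (e : γ ≃ α) : countLE (f ∘ e) = countLE f := by
  funext x
  exact Set.ncard_congr' (e.subtypeEquiv fun _ => Iff.rfl)

lemma countLE_pow {α : Type*} {f : α → ℝ} (hf : ∀ a, 0 ≤ f a) {e : ℕ} (he : e ≠ 0) {x : ℝ}
    (hx : 0 ≤ x) : countLE (fun a => f a ^ e) x = countLE f (x ^ (1 / (e : ℝ))) := by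
  unfold countLE
  congr with a
  rw [one_div, Real.le_rpow_inv_iff_of_pos (hf a) hx (by positivity), Real.rpow_natCast]

lemma isLittleO_rpow_rpow_atTop_of_lt {p q : ℝ} (hpq : p < q) :
    (fun x : ℝ => x ^ p) =o[atTop] fun x => x ^ q := by
  have hpos := eventually_gt_atTop (0 : ℝ)
  refine (isLittleO_iff_tendsto' (hpos.mono fun x hx h => ?_)).2
    ((tendsto_rpow_neg_atTop (sub_pos.2 hpq)).congr' (hpos.mono fun x hx => ?_))
  · exact absurd h (Real.rpow_pos_of_pos hx q).ne'
  · rw [neg_sub, Real.rpow_sub hx]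

lemma exists_forall_abs_le_mul_rpow {E : ℝ → ℝ} {τ : ℝ} (hτ : 0 ≤ τ)
    (hE : E =O[atTop] fun x => x ^ τ) (hbdd : ∀ X, ∃ B, ∀ x ∈ Set.Icc 1 X, |E x| ≤ B) :
    ∃ C, 0 ≤ C ∧ ∀ x, 1 ≤ x → |E x| ≤ C * x ^ τ := by
  obtain ⟨c, hc⟩ := hE.bound
  obtain ⟨X, hX⟩ := eventually_atTop.1 hc
  obtain ⟨B, hB⟩ := hbdd X
  refine ⟨max 0 (max c B), le_max_left _ _, fun x hx => ?_⟩
  have hxτ : 1 ≤ x ^ τ := Real.one_le_rpow hx hτ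
  rcases le_total X x with hXx | hxX
  · calc |E x| ≤ c * x ^ τ := by simpa [abs_of_nonneg (zero_le_one.trans hxτ)] using hX x hXx
      _ ≤ max 0 (max c B) * x ^ τ := by
        gcongr
        exact (le_max_left _ _).trans (le_max_right _ _)
  · calc |E x| ≤ B := hB x ⟨hx, hxX⟩
      _ ≤ max 0 (max c B) := (le_max_right _ _).trans (le_max_right _ _)
      _ ≤ max 0 (max c B) * x ^ τ := le_mul_of_one_le_right (le_max_left _ _) hxτ

lemma finite_le_of_tendsto_countLE {α : Type*} {f : α → ℝ}
    (hf : Tendsto (countLE f) atTop atTop) (x : ℝ) : {a | f a ≤ x}.Finite := by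
  obtain ⟨y, hxy, hy⟩ := ((eventually_ge_atTop x).and (hf.eventually_gt_atTop 0)).exists
  exact (Set.finite_of_ncard_pos hy).subset fun a ha => le_trans ha hxy

lemma tendsto_countLE_of_isBigO {α : Type*} {f : α → ℝ} {κ ρ τ : ℝ} (hκ : 0 < κ) (hρ : 0 < ρ)
    (hτρ : τ < ρ) (hf : (fun x => (countLE f x : ℝ) - κ * x ^ ρ) =O[atTop] fun x => x ^ τ) :
    Tendsto (countLE f) atTop atTop := by
  have hequiv : IsEquivalent atTop (fun x => (countLE f x : ℝ)) fun x => κ * x ^ ρ :=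
    (hf.trans_isLittleO (isLittleO_rpow_rpow_atTop_of_lt hτρ)).const_mul_right hκ.ne'
  exact tendsto_natCast_atTop_iff.1
    (hequiv.symm.tendsto_atTop ((tendsto_rpow_atTop hρ).const_mul_atTop hκ))

namespace IsArithmeticNorm

variable {α γ : Type*} {f u : α → ℝ} {g : γ → ℝ} {κ ρ τ β σ x : ℝ}

lemma pos (hf : IsArithmeticNorm f) (a : α) : 0 < f a := one_pos.trans_le (hf.one_le a)

/-- The elements of norm at most `x`, as a finite set to sum over. -/
def sublevel (hf : IsArithmeticNorm f) (x : ℝ) : Finset α := (hf.finite_le x).toFinset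

@[simp]
lemma mem_sublevel (hf : IsArithmeticNorm f) {a : α} : a ∈ hf.sublevel x ↔ f a ≤ x :=
  (hf.finite_le x).mem_toFinset

lemma card_sublevel (hf : IsArithmeticNorm f) (x : ℝ) : (hf.sublevel x).card = countLE f x :=
  (Set.ncard_eq_toFinset_card _ (hf.finite_le x)).symm

lemma card_filter_le (hf : IsArithmeticNorm f) (F : Finset α) (x : ℝ) :
    (F.filter (f · ≤ x)).card ≤ countLE f x := by
  rw [← hf.card_sublevel]
  exact Finset.card_le_card fun a ha => hf.mem_sublevel.2 (Finset.mem_filter.1 ha).2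

lemma countLE_mono (hf : IsArithmeticNorm f) : Monotone (countLE f) := fun _ y hxy =>
  Set.ncard_le_ncard (fun _ ha => le_trans ha hxy) (hf.finite_le y)

lemma comp_equiv (hf : IsArithmeticNorm f) (e : γ ≃ α) : IsArithmeticNorm (f ∘ e) where
  one_le c := hf.one_le (e c)
  finite_le x := (hf.finite_le x).preimage e.injective.injOn

lemma pow (hf : IsArithmeticNorm f) {e : ℕ} (he : e ≠ 0) :
    IsArithmeticNorm fun a => f a ^ e where
  one_le a := one_le_pow₀ (hf.one_le a)
  finite_le x := (hf.finite_le x).subset fun a ha => (le_self_pow₀ (hf.one_le a) he).trans ha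

lemma mul (hu : IsArithmeticNorm u) (hg : IsArithmeticNorm g) :
    IsArithmeticNorm fun p : α × γ => u p.1 * g p.2 where
  one_le p := one_le_mul_of_one_le_of_one_le (hu.one_le p.1) (hg.one_le p.2)
  finite_le x := ((hu.finite_le x).prod (hg.finite_le x)).subset fun p hp =>
    ⟨(le_mul_of_one_le_right (hu.pos p.1).le (hg.one_le p.2)).trans hp,
      (le_mul_of_one_le_left (hg.pos p.2).le (hu.one_le p.1)).trans hp⟩

lemma countLE_mul (hu : IsArithmeticNorm u) (hg : IsArithmeticNorm g) (x : ℝ) :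
    countLE (fun p : α × γ => u p.1 * g p.2) x = ∑ c ∈ hg.sublevel x, countLE u (x / g c) := by
  simp only [← hu.card_sublevel, ← (hu.mul hg).card_sublevel, ← Finset.card_sigma]
  refine Finset.card_nbij' (fun p => ⟨p.2, p.1⟩) (fun q => (q.2, q.1)) ?_ ?_
    (fun _ _ => rfl) (fun _ _ => rfl)
  · intro p hp
    have hp : u p.1 * g p.2 ≤ x := (hu.mul hg).mem_sublevel.1 hp
    simpa [le_div_iff₀ (hg.pos p.2), hp] using
      (le_mul_of_one_le_left (hg.pos p.2).le (hu.one_le p.1)).trans hp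
  · intro q hq
    have hq : u q.2 ≤ x / g q.1 := hu.mem_sublevel.1 (Finset.mem_sigma.1 hq).2
    simpa [le_div_iff₀ (hg.pos q.1)] using hq

lemma exists_abs_countLE_sub_le (hf : IsArithmeticNorm f) (hρ : 0 ≤ ρ) (hτ : 0 ≤ τ)
    (hO : (fun x => (countLE f x : ℝ) - κ * x ^ ρ) =O[atTop] fun x => x ^ τ) :
    ∃ C, 0 ≤ C ∧ ∀ x, 1 ≤ x → |(countLE f x : ℝ) - κ * x ^ ρ| ≤ C * x ^ τ := by
  refine exists_forall_abs_le_mul_rpow hτ hO fun X => ⟨countLE f X + |κ| * X ^ ρ, ?_⟩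
  rintro x ⟨hx1, hxX⟩
  have hx0 : 0 ≤ x := zero_le_one.trans hx1
  calc |(countLE f x : ℝ) - κ * x ^ ρ| ≤ |(countLE f x : ℝ)| + |κ * x ^ ρ| := abs_sub _ _
    _ = countLE f x + |κ| * x ^ ρ := by
      rw [Nat.abs_cast, abs_mul, abs_of_nonneg (Real.rpow_nonneg hx0 ρ)]
    _ ≤ countLE f X + |κ| * X ^ ρ := by
      gcongr
      exact hf.countLE_mono hxX

lemma exists_countLE_le (hf : IsArithmeticNorm f) (hβ : 0 ≤ β)
    (hO : (fun x => (countLE f x : ℝ)) =O[atTop] fun x => x ^ β) :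
    ∃ C, 0 ≤ C ∧ ∀ x, 1 ≤ x → (countLE f x : ℝ) ≤ C * x ^ β := by
  simpa using hf.exists_abs_countLE_sub_le (κ := 0) (ρ := 0) le_rfl hβ (by simpa using hO)

lemma exists_sum_rpow_neg_tail_le (hf : IsArithmeticNorm f) (hβ : 0 ≤ β) (hβσ : β < σ)
    (hO : (fun x => (countLE f x : ℝ)) =O[atTop] fun x => x ^ β) :
    ∃ A, ∀ x, 1 ≤ x → ∀ F : Finset α, (∀ a ∈ F, x ≤ f a) →
      ∑ a ∈ F, f a ^ (-σ) ≤ A * x ^ (β - σ) := by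
  obtain ⟨C, -, hC⟩ := hf.exists_countLE_le hβ hO
  refine ⟨C * (σ / (σ - β)), fun x hx F hF =>
    sum_rpow_neg_le_of_forall_le hβ hβσ (one_pos.trans_le hx) hF fun t ht => ?_⟩
  exact (Nat.cast_le.2 (hf.card_filter_le F t)).trans (hC t (hx.trans ht))

lemma summable_rpow_neg (hf : IsArithmeticNorm f) (hβ : 0 ≤ β) (hβσ : β < σ)
    (hO : (fun x => (countLE f x : ℝ)) =O[atTop] fun x => x ^ β) :
    Summable fun a => f a ^ (-σ) := by
  obtain ⟨A, hA⟩ := hf.exists_sum_rpow_neg_tail_le hβ hβσ hO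
  exact summable_of_sum_le (fun a => Real.rpow_nonneg (hf.pos a).le _)
    fun F => hA 1 le_rfl F fun a _ => hf.one_le a

lemma exists_abs_tsum_sub_sum_sublevel_le (hf : IsArithmeticNorm f) (hβ : 0 ≤ β) (hβσ : β < σ)
    (hO : (fun x => (countLE f x : ℝ)) =O[atTop] fun x => x ^ β) :
    ∃ A, ∀ x, 1 ≤ x →
      |∑' a, f a ^ (-σ) - ∑ a ∈ hf.sublevel x, f a ^ (-σ)| ≤ A * x ^ (β - σ) := by
  obtain ⟨A, hA⟩ := hf.exists_sum_rpow_neg_tail_le hβ hβσ hO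
  have hnonneg (a : α) : 0 ≤ f a ^ (-σ) := Real.rpow_nonneg (hf.pos a).le _
  refine ⟨A, fun x hx => ?_⟩
  rw [← (hf.summable_rpow_neg hβ hβσ hO).sum_add_tsum_subtype_compl (hf.sublevel x),
    add_sub_cancel_left, abs_of_nonneg (tsum_nonneg fun a : {a // a ∉ hf.sublevel x} => hnonneg a)]
  refine Real.tsum_le_of_sum_le (fun a => hnonneg a) fun F => ?_
  refine (Finset.sum_map F (.subtype _) fun a => f a ^ (-σ)).ge.trans (hA x hx _ fun a ha => ?_)
  obtain ⟨⟨b, hb⟩, -, rfl⟩ := Finset.mem_map.1 ha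
  exact (not_le.1 (mt hf.mem_sublevel.2 hb)).le

lemma sum_sublevel_rpow_neg_isBigO_one (hf : IsArithmeticNorm f) (hβ : 0 ≤ β) (hβσ : β < σ)
    (hO : (fun x => (countLE f x : ℝ)) =O[atTop] fun x => x ^ β) :
    (fun x => ∑ a ∈ hf.sublevel x, f a ^ (-σ)) =O[atTop] fun _ => (1 : ℝ) := by
  have hnonneg (a : α) : 0 ≤ f a ^ (-σ) := Real.rpow_nonneg (hf.pos a).le _
  refine IsBigO.of_bound (∑' a, f a ^ (-σ)) (.of_forall fun x => ?_)
  rw [norm_one, mul_one, Real.norm_of_nonneg (Finset.sum_nonneg fun a _ => hnonneg a)]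
  exact (hf.summable_rpow_neg hβ hβσ hO).sum_le_tsum _ fun a _ => hnonneg a

lemma sum_sublevel_rpow_neg_isBigO_log (hf : IsArithmeticNorm f) (hβ : 0 ≤ β)
    (hO : (fun x => (countLE f x : ℝ)) =O[atTop] fun x => x ^ β) :
    (fun x => ∑ a ∈ hf.sublevel x, f a ^ (-β)) =O[atTop] Real.log := by
  obtain ⟨C, hC0, hC⟩ := hf.exists_countLE_le hβ hO
  refine IsBigO.of_bound (C * (1 + β)) ?_
  filter_upwards [eventually_ge_atTop (Real.exp 1)] with x hx
  have hx1 : 1 ≤ x := (Real.one_le_exp zero_le_one).trans hx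
  have hlog : 1 ≤ Real.log x := (Real.le_log_iff_exp_le (one_pos.trans_le hx1)).2 hx
  rw [Real.norm_of_nonneg (Finset.sum_nonneg fun a _ => Real.rpow_nonneg (hf.pos a).le _),
    Real.norm_of_nonneg (zero_le_one.trans hlog)]
  calc ∑ a ∈ hf.sublevel x, f a ^ (-β) ≤ C * (1 + β * Real.log x) :=
        sum_rpow_neg_le_log hβ hx1 (fun a ha => ⟨hf.one_le a, hf.mem_sublevel.1 ha⟩)
          fun t ht => (Nat.cast_le.2 (hf.card_filter_le _ t)).trans (hC t ht)
    _ ≤ C * (1 + β) * Real.log x := by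
        rw [mul_assoc, one_add_mul]
        gcongr

lemma sum_sublevel_rpow_neg_isBigO_rpow (hf : IsArithmeticNorm f) (hσ : 0 ≤ σ) (hσβ : σ < β)
    (hO : (fun x => (countLE f x : ℝ)) =O[atTop] fun x => x ^ β) :
    (fun x => ∑ a ∈ hf.sublevel x, f a ^ (-σ)) =O[atTop] fun x => x ^ (β - σ) := by
  obtain ⟨C, -, hC⟩ := hf.exists_countLE_le (hσ.trans hσβ.le) hO
  refine IsBigO.of_bound (C * (β / (β - σ))) ?_
  filter_upwards [eventually_ge_atTop 1] with x hx
  rw [Real.norm_of_nonneg (Finset.sum_nonneg fun a _ => Real.rpow_nonneg (hf.pos a).le _),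
    Real.norm_of_nonneg (Real.rpow_nonneg (zero_le_one.trans hx) _)]
  exact sum_rpow_neg_le_of_lt hσ hσβ hx (fun a ha => ⟨hf.one_le a, hf.mem_sublevel.1 ha⟩)
    fun t ht => (Nat.cast_le.2 (hf.card_filter_le _ t)).trans (hC t ht)

end IsArithmeticNorm

end Counting

section Convolution

/-- The error order in `#{(a, c) | u a * g c ≤ x}` when the counting function of `u` has error
`O(x ^ τ)` and that of `g` is `O(x ^ β)`. -/
def convolutionError (β τ x : ℝ) : ℝ :=
  if β < τ then x ^ τ else if τ = β then x ^ β * Real.log x else x ^ β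

variable {α γ : Type*} {u : α → ℝ} {g : γ → ℝ} {κ ρ τ β : ℝ}

lemma div_rpow_eq_mul_rpow_neg {x y : ℝ} (hx : 0 ≤ x) (hy : 0 ≤ y) (s : ℝ) :
    (x / y) ^ s = x ^ s * y ^ (-s) := by
  rw [Real.div_rpow hx hy, Real.rpow_neg hy, div_eq_mul_inv]

lemma rpow_isBigO_rpow_mul_log (β : ℝ) :
    (fun x : ℝ => x ^ β) =O[atTop] fun x => x ^ β * Real.log x := by
  simpa using (isBigO_refl (fun x : ℝ => x ^ β) atTop).mul
    (Real.isLittleO_const_log_atTop (c := 1)).isBigO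

lemma rpow_isBigO_convolutionError (β τ : ℝ) :
    (fun x : ℝ => x ^ β) =O[atTop] convolutionError β τ := by
  unfold convolutionError
  split_ifs with hβτ hτβ
  · exact (isLittleO_rpow_rpow_atTop_of_lt hβτ).isBigO
  · exact rpow_isBigO_rpow_mul_log β
  · exact isBigO_refl _ _

namespace IsArithmeticNorm

lemma rpow_mul_sum_sublevel_isBigO (hg : IsArithmeticNorm g) (hτ : 0 ≤ τ) (hβ : 0 ≤ β)
    (hgO : (fun x => (countLE g x : ℝ)) =O[atTop] fun x => x ^ β) :
    (fun x => x ^ τ * ∑ c ∈ hg.sublevel x, g c ^ (-τ)) =O[atTop] convolutionError β τ := by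
  have hrefl := isBigO_refl (fun x : ℝ => x ^ τ) atTop
  unfold convolutionError
  split_ifs with hβτ hτβ
  · simpa using hrefl.mul (hg.sum_sublevel_rpow_neg_isBigO_one hβ hβτ hgO)
  · subst hτβ
    exact hrefl.mul (hg.sum_sublevel_rpow_neg_isBigO_log hβ hgO)
  · have hlt : τ < β := lt_of_le_of_ne (not_lt.1 hβτ) hτβ
    refine (hrefl.mul (hg.sum_sublevel_rpow_neg_isBigO_rpow hτ hlt hgO)).congr' .rfl ?_
    filter_upwards [eventually_gt_atTop 0] with x hx
    rw [← Real.rpow_add hx, add_sub_cancel]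

lemma one_le_div_of_mem_sublevel (hg : IsArithmeticNorm g) {x : ℝ} {c : γ}
    (hc : c ∈ hg.sublevel x) : 1 ≤ x / g c :=
  (one_le_div (hg.pos c)).2 (hg.mem_sublevel.1 hc)

lemma countLE_mul_isBigO (hu : IsArithmeticNorm u) (hg : IsArithmeticNorm g) (hβ : 0 ≤ β)
    (hβρ : β < ρ) (huO : (fun x => (countLE u x : ℝ)) =O[atTop] fun x => x ^ ρ)
    (hgO : (fun x => (countLE g x : ℝ)) =O[atTop] fun x => x ^ β) :
    (fun x => (countLE (fun p : α × γ => u p.1 * g p.2) x : ℝ)) =O[atTop] fun x => x ^ ρ := by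
  obtain ⟨C, -, hC⟩ := hu.exists_countLE_le (hβ.trans hβρ.le) huO
  have hbound : (fun x => C * (x ^ ρ * ∑ c ∈ hg.sublevel x, g c ^ (-ρ)))
      =O[atTop] fun x => x ^ ρ := by
    simpa using ((isBigO_refl (fun x : ℝ => x ^ ρ) atTop).mul
      (hg.sum_sublevel_rpow_neg_isBigO_one hβ hβρ hgO)).const_mul_left C
  refine .trans (.of_norm_eventuallyLE ?_) hbound
  filter_upwards [eventually_ge_atTop 0] with x hx
  rw [hu.countLE_mul hg, Nat.cast_sum, Finset.mul_sum, Finset.mul_sum,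
    Real.norm_of_nonneg (Finset.sum_nonneg fun _ _ => Nat.cast_nonneg _)]
  refine Finset.sum_le_sum fun c hc => ?_
  rw [← div_rpow_eq_mul_rpow_neg hx (hg.pos _).le]
  exact hC _ (hg.one_le_div_of_mem_sublevel hc)

lemma countLE_mul_sub_sum_sublevel_isBigO (hu : IsArithmeticNorm u) (hg : IsArithmeticNorm g)
    (hρ : 0 ≤ ρ) (hτ : 0 ≤ τ)
    (huO : (fun x => (countLE u x : ℝ) - κ * x ^ ρ) =O[atTop] fun x => x ^ τ) :
    (fun x => (countLE (fun p : α × γ => u p.1 * g p.2) x : ℝ) -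
        κ * (∑ c ∈ hg.sublevel x, g c ^ (-ρ)) * x ^ ρ)
      =O[atTop] fun x => x ^ τ * ∑ c ∈ hg.sublevel x, g c ^ (-τ) := by
  obtain ⟨C, -, hC⟩ := hu.exists_abs_countLE_sub_le hρ hτ huO
  refine IsBigO.of_bound C ?_
  filter_upwards [eventually_ge_atTop 0] with x hx
  have hterm : ∀ c ∈ hg.sublevel x,
      |(countLE u (x / g c) : ℝ) - κ * g c ^ (-ρ) * x ^ ρ| ≤ C * (x ^ τ * g c ^ (-τ)) := by
    intro c hc
    simpa only [div_rpow_eq_mul_rpow_neg hx (hg.pos _).le, mul_assoc, mul_comm (x ^ ρ)] using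
      hC _ (hg.one_le_div_of_mem_sublevel hc)
  have hnonneg : 0 ≤ x ^ τ * ∑ c ∈ hg.sublevel x, g c ^ (-τ) :=
    mul_nonneg (Real.rpow_nonneg hx τ)
      (Finset.sum_nonneg fun c _ => Real.rpow_nonneg (hg.pos c).le _)
  rw [hu.countLE_mul hg, Nat.cast_sum, Finset.mul_sum, Finset.sum_mul, ← Finset.sum_sub_distrib,
    Real.norm_eq_abs, Real.norm_of_nonneg hnonneg, Finset.mul_sum, Finset.mul_sum]
  exact (Finset.abs_sum_le_sum_abs _ _).trans (Finset.sum_le_sum hterm)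

lemma tsum_sub_sum_sublevel_mul_rpow_isBigO (hg : IsArithmeticNorm g) (hβ : 0 ≤ β) (hβρ : β < ρ)
    (hgO : (fun x => (countLE g x : ℝ)) =O[atTop] fun x => x ^ β) :
    (fun x => (∑' c, g c ^ (-ρ) - ∑ c ∈ hg.sublevel x, g c ^ (-ρ)) * x ^ ρ)
      =O[atTop] fun x => x ^ β := by
  obtain ⟨A, hA⟩ := hg.exists_abs_tsum_sub_sum_sublevel_le hβ hβρ hgO
  refine IsBigO.of_bound A ?_
  filter_upwards [eventually_ge_atTop 1] with x hx
  have hx0 : 0 < x := one_pos.trans_le hx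
  rw [norm_mul, Real.norm_eq_abs, Real.norm_of_nonneg (Real.rpow_nonneg hx0.le ρ),
    Real.norm_of_nonneg (Real.rpow_nonneg hx0.le β)]
  calc _ ≤ A * x ^ (β - ρ) * x ^ ρ := by
        gcongr
        exact hA x hx
    _ = A * x ^ β := by rw [mul_assoc, ← Real.rpow_add hx0, sub_add_cancel]

theorem countLE_mul_sub_isBigO (hu : IsArithmeticNorm u) (hg : IsArithmeticNorm g)
    (hτ : 0 ≤ τ) (hβ : 0 ≤ β) (hβρ : β < ρ)
    (huO : (fun x => (countLE u x : ℝ) - κ * x ^ ρ) =O[atTop] fun x => x ^ τ)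
    (hgO : (fun x => (countLE g x : ℝ)) =O[atTop] fun x => x ^ β) :
    (fun x => (countLE (fun p : α × γ => u p.1 * g p.2) x : ℝ) -
        κ * (∑' c, g c ^ (-ρ)) * x ^ ρ) =O[atTop] convolutionError β τ := by
  have hmain := (hu.countLE_mul_sub_sum_sublevel_isBigO hg (hβ.trans hβρ.le) hτ huO).trans
    (hg.rpow_mul_sum_sublevel_isBigO hτ hβ hgO)
  have htail := ((hg.tsum_sub_sum_sublevel_mul_rpow_isBigO hβ hβρ hgO).const_mul_left κ).trans
    (rpow_isBigO_convolutionError β τ)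
  refine (hmain.sub htail).congr_left fun x => ?_
  ring

end IsArithmeticNorm

end Convolution

section Tuples

lemma hasSum_prod_of_nonneg {k : ℕ} {α : Fin k → Type*} {f : ∀ j, α j → ℝ}
    (hf : ∀ j a, 0 ≤ f j a) (hsum : ∀ j, Summable (f j)) :
    HasSum (fun b : ∀ j, α j => ∏ j, f j (b j)) (∏ j, ∑' a, f j a) := by
  induction k with
  | zero => simp
  | succ k ih =>
    have htail := ih (fun j => hf j.succ) fun j => hsum j.succ
    have hmul := (hsum 0).mul_of_nonneg htail.summable (hf 0)
      fun b => Finset.prod_nonneg fun j _ => hf _ _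
    rw [Fin.prod_univ_succ, ← (Fin.consEquiv α).hasSum_iff]
    refine ((hsum 0).hasSum.mul htail hmul).congr_fun ?_
    intro p
    simp [Fin.prod_univ_succ, Fin.consEquiv]

/-- The weight `n(b₀) ^ e * n(b₁) ^ (e + 1) * ⋯ * n(b_{k-1}) ^ (e + k - 1)` of a `k`-tuple. -/
def tupleNorm {α : Type*} (n : α → ℝ) (e : ℕ) {k : ℕ} (b : Fin k → α) : ℝ :=
  ∏ j, n (b j) ^ (e + (j : ℕ))

variable {α : Type*} {n : α → ℝ} {κ θ : ℝ}

lemma tupleNorm_cons (n : α → ℝ) (e : ℕ) {k : ℕ} (a : α) (b : Fin k → α) :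
    tupleNorm n e (Fin.cons a b : Fin (k + 1) → α) = n a ^ e * tupleNorm n (e + 1) b := by
  simp [tupleNorm, Fin.prod_univ_succ, add_assoc, add_comm 1]

lemma tupleNorm_comp_consEquiv (n : α → ℝ) (e k : ℕ) :
    tupleNorm n e ∘ Fin.consEquiv (fun _ : Fin (k + 1) => α) =
      fun p => n p.1 ^ e * tupleNorm n (e + 1) p.2 :=
  funext fun p => tupleNorm_cons n e p.1 p.2

lemma tsum_tupleNorm_rpow_neg {e k : ℕ} {s : ℝ} (hn : ∀ a, 0 ≤ n a)
    (hsum : ∀ j : Fin k, Summable fun a => n a ^ (-(s * (e + j)))) :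
    ∑' b : Fin k → α, tupleNorm n e b ^ (-s) = ∏ j : Fin k, ∑' a, n a ^ (-(s * (e + j))) := by
  rw [← (hasSum_prod_of_nonneg (fun j a => Real.rpow_nonneg (hn a) _) hsum).tsum_eq]
  refine tsum_congr fun b => ?_
  rw [tupleNorm, ← Real.finsetProd_rpow _ _ fun j _ => pow_nonneg (hn _) _]
  refine Finset.prod_congr rfl fun j _ => ?_
  rw [← Real.rpow_natCast_mul (hn _)]
  push_cast
  ring_nf

lemma countLE_pow_sub_isBigO (hn : ∀ a, 0 ≤ n a) {e : ℕ} (he : e ≠ 0)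
    (hO : (fun x => (countLE n x : ℝ) - κ * x) =O[atTop] fun x => x ^ θ) :
    (fun x => (countLE (fun a => n a ^ e) x : ℝ) - κ * x ^ (1 / (e : ℝ)))
      =O[atTop] fun x => x ^ (θ / e) := by
  refine (hO.comp_tendsto (tendsto_rpow_atTop (y := 1 / (e : ℝ)) (by positivity))).congr' ?_ ?_
  all_goals filter_upwards [eventually_ge_atTop 0] with x hx
  · simp only [Function.comp_apply, countLE_pow hn he hx]
  · rw [Function.comp_apply, ← Real.rpow_mul hx, one_div_mul_eq_div]

lemma countLE_isBigO_id (hθ : θ ≤ 1)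
    (hO : (fun x => (countLE n x : ℝ) - κ * x) =O[atTop] fun x => x ^ θ) :
    (fun x => (countLE n x : ℝ)) =O[atTop] fun x => x := by
  have hrem : (fun x : ℝ => x ^ θ) =O[atTop] fun x => x := by
    refine .of_norm_eventuallyLE ?_
    filter_upwards [eventually_ge_atTop 1] with x hx
    rw [Real.norm_of_nonneg (Real.rpow_nonneg (zero_le_one.trans hx) θ)]
    simpa using Real.rpow_le_rpow_of_exponent_le hx hθ
  simpa using (hO.trans hrem).add (isBigO_const_mul_self κ (fun x : ℝ => x) atTop)

namespace IsArithmeticNorm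

lemma tuple (hn : IsArithmeticNorm n) {e : ℕ} (he : e ≠ 0) (k : ℕ) :
    IsArithmeticNorm (tupleNorm n e (k := k)) := by
  induction k generalizing e with
  | zero => exact ⟨fun b => by simp [tupleNorm], fun x => Set.toFinite _⟩
  | succ k ih =>
    have hmul := (hn.pow he).mul (ih e.succ_ne_zero)
    rw [← tupleNorm_comp_consEquiv n e k] at hmul
    simpa [Function.comp_assoc] using hmul.comp_equiv (Fin.consEquiv fun _ => α).symm

lemma countLE_tupleNorm_isBigO (hn : IsArithmeticNorm n)
    (hO : (fun x => (countLE n x : ℝ)) =O[atTop] fun x => x) {e : ℕ} (he : e ≠ 0) (k : ℕ) :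
    (fun x => (countLE (tupleNorm n e (k := k)) x : ℝ))
      =O[atTop] fun x => x ^ (1 / (e : ℝ)) := by
  induction k generalizing e with
  | zero =>
    have hconst : (fun _ => (1 : ℝ)) =O[atTop] fun x : ℝ => x ^ (1 / (e : ℝ)) := by
      simpa using (isLittleO_rpow_rpow_atTop_of_lt
        (show 0 < 1 / (e : ℝ) by positivity)).isBigO
    refine .trans (.of_bound 1 (.of_forall fun x => ?_)) hconst
    simpa [countLE] using Set.ncard_le_one_of_subsingleton {b : Fin 0 → α | tupleNorm n e b ≤ x}
  | succ k ih =>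
    have he' : (0 : ℝ) < e := by positivity
    rw [← countLE_comp_equiv _ (Fin.consEquiv fun _ => α), tupleNorm_comp_consEquiv]
    refine (hn.pow he).countLE_mul_isBigO (hn.tuple e.succ_ne_zero k) (by positivity)
      (one_div_lt_one_div_of_lt he' (by push_cast; linarith)) ?_ (ih e.succ_ne_zero)
    simpa using countLE_pow_sub_isBigO (κ := 0) (θ := 1) (fun a => (hn.pos a).le) he
      (by simpa using hO)

lemma tsum_tupleNorm_succ_rpow_neg (hn : IsArithmeticNorm n)
    (hO : (fun x => (countLE n x : ℝ)) =O[atTop] fun x => x) {h : ℕ} (hh : h ≠ 0) (k : ℕ) :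
    ∑' b : Fin k → α, tupleNorm n (h + 1) b ^ (-(1 / (h : ℝ))) =
      ∏ i ∈ Finset.Icc 1 k, ∑' a, 1 / n a ^ (1 + (i : ℝ) / h) := by
  have hexp (j : Fin k) : 1 / (h : ℝ) * ((h + 1 : ℕ) + j) = 1 + ((1 + j : ℕ) : ℝ) / h := by
    push_cast
    field_simp
    ring
  have hsum (j : Fin k) : Summable fun a => n a ^ (-(1 / (h : ℝ) * ((h + 1 : ℕ) + j))) :=
    hn.summable_rpow_neg zero_le_one (by rw [hexp]; exact lt_add_of_pos_right 1 (by positivity))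
      (by simpa using hO)
  rw [tsum_tupleNorm_rpow_neg (fun a => (hn.pos a).le) hsum, ← Finset.Ico_succ_right_eq_Icc,
    Finset.prod_Ico_eq_prod_range, Nat.succ_eq_succ, Nat.succ_sub_one, Finset.prod_range]
  simp only [hexp]
  simp only [Real.rpow_neg (hn.pos _).le, one_div]

end IsArithmeticNorm

theorem Th_count_general (hn : IsArithmeticNorm n) (hθ : 0 ≤ θ) (hθ1 : θ ≤ 1)
    (hO : (fun x => (countLE n x : ℝ) - κ * x) =O[atTop] fun x => x ^ θ) {h k : ℕ}
    (hh : h ≠ 0) (hk : k ≠ 0) :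
    (fun x => (countLE (tupleNorm n h (k := k)) x : ℝ) -
        κ * (∏ i ∈ Finset.Icc 1 (k - 1), ∑' a, 1 / n a ^ (1 + (i : ℝ) / h)) * x ^ (1 / (h : ℝ)))
      =O[atTop] convolutionError (1 / ((h : ℝ) + 1)) (θ / h) := by
  obtain ⟨l, rfl⟩ := Nat.exists_eq_succ_of_ne_zero hk
  have hlinear := countLE_isBigO_id hθ1 hO
  have htail : (fun x => (countLE (tupleNorm n (h + 1) (k := l)) x : ℝ))
      =O[atTop] fun x => x ^ (1 / ((h : ℝ) + 1)) := by
    simpa using hn.countLE_tupleNorm_isBigO hlinear h.succ_ne_zero l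
  have hconv := (hn.pow hh).countLE_mul_sub_isBigO (hn.tuple h.succ_ne_zero l)
    (by positivity) (by positivity) (one_div_lt_one_div_of_lt (by positivity) (lt_add_one _))
    (countLE_pow_sub_isBigO (fun a => (hn.pos a).le) hh hO) htail
  rwa [← tupleNorm_comp_consEquiv, countLE_comp_equiv,
    hn.tsum_tupleNorm_succ_rpow_neg hlinear hh] at hconv

end Tuples

section FreeAbelianMonoid

variable {P : Type*} {N : P → ℕ} {κ θ : ℝ}

lemma one_le_Nm (hN : ∀ p, 1 ≤ N p) (m : P →₀ ℕ) : 1 ≤ Nm N m :=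
  Finset.one_le_prod' fun p _ => Nat.one_le_pow _ _ (hN p)

lemma StarCond.isArithmeticNorm_Nm (hstar : StarCond N κ θ) (hN : ∀ p, 1 ≤ N p) :
    IsArithmeticNorm fun m => (Nm N m : ℝ) := by
  obtain ⟨hκ, -, hθ1, hO⟩ := hstar
  exact ⟨fun m => Nat.one_le_cast.2 (one_le_Nm hN m), finite_le_of_tendsto_countLE
    (tendsto_countLE_of_isBigO (ρ := 1) hκ one_pos hθ1 (by simpa [countLE] using hO))⟩

lemma convolutionError_isBigO_RNfull {h : ℕ} (hh : 2 ≤ h) (θ : ℝ) :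
    convolutionError (1 / ((h : ℝ) + 1)) (θ / h) =O[atTop] RNfull h θ := by
  have hh0 : (0 : ℝ) < h := by positivity
  have hlt : 1 / ((h : ℝ) + 1) < θ / h ↔ (h : ℝ) / (h + 1) < θ := by
    rw [lt_div_iff₀ hh0, one_div_mul_eq_div]
  have heq : θ / h = 1 / ((h : ℝ) + 1) ↔ θ = (h : ℝ) / (h + 1) := by
    rw [div_eq_iff hh0.ne', one_div_mul_eq_div]
  unfold convolutionError RNfull
  simp only [hlt, heq]
  split_ifs with hlarge hcritical hlog hlog
  · exact isBigO_refl _ _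
  · exact isBigO_refl _ _
  · exact absurd ⟨1, le_rfl, by lia, by simpa using hcritical⟩ hlog
  -- At `θ = h / (h + i)` with `i ≥ 2` the logarithm in `RNfull` is not needed.
  · exact rpow_isBigO_rpow_mul_log _
  · exact isBigO_refl _ _

end FreeAbelianMonoid

/-- Asymptotics for the counting function `T_h(x)`. -/
theorem Th_count {P : Type*} [Countable P] (N : P → ℕ)
    (hN : ∀ p, 2 ≤ N p) (κ θ : ℝ) (hstar : StarCond N κ θ)
    (h : ℕ) (hh : 2 ≤ h) :
    (fun x : ℝ =>
        ({a : Fin h → (P →₀ ℕ) |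
            (∏ i, (Nm N (a i) : ℝ) ^ (h + (i : ℕ))) ≤ x}.ncard : ℝ)
          - κ * (∏ i ∈ Finset.Icc 1 (h - 1), zetaM N (1 + (i : ℝ) / (h : ℝ))) *
              x ^ (1 / (h : ℝ)))
      =O[atTop] RNfull h θ := by
  have ⟨_, hθ, hθ1, hO⟩ := hstar
  exact (Th_count_general (hstar.isArithmeticNorm_Nm fun p => one_le_two.trans (hN p)) hθ hθ1.le hO
    (by lia) (by lia)).trans (convolutionError_isBigO_RNfull hh θ)
end
end
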